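/- arXiv:2001.05261 — 9 statements merged into one kernel-verified Lean document; each statement's English description precedes it below -/
import Mathlib

section
/- Let E = ⋃_{n=1}^∞ E_n where each E_n ⊆ ℝ is a closed, strongly one-sided dense set. Then there exists a continuous function f : ℝ → ℝ such that lip f = 𝟙_E; that is, E is a lip 1 set. -/
/-!
The function is a sum `f = ∑ fₙ`, one summand per closed set. Write `Gₙ = ⋃_{i<n} Eᵢ`, and let `gₙ`
be the primitive of `𝟙_{Eₙ}`. The summand `fₙ = dist (gₙ ·, gₙ(Zₙ))` folds `gₙ` up like a triangle
wave with zeros at a set `Zₙ ⊇ Gₙ` which is discrete off `Gₙ` and accumulates so fast at `Gₙ` that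
`0 ≤ fₙ ≤ 4⁻ⁿ dist(·, Gₙ)²` (`exists_separated_dense`, `exists_level`). Folding preserves
increments locally: for `x ∉ Gₙ` and `y` close to `x`, on either side,
`|fₙ y - fₙ x| = λ(Eₙ ∩ [x, y])` (`infDist_fold`). Moreover `fₙ` is constant on intervals
missing `Eₙ`.

If `x ∈ E` and `n` is the first index with `x ∈ Eₙ`, then near `x` the summands before the `n`-th
are constant, those after it are `O(|y - x|²)` in total, and the `n`-th one has increments
`λ(Eₙ ∩ [x, y])`; strong one-sided density makes `Mf f x r` tend to `1`.

If `x ∉ E`, then on the ball of radius `dist(x, Gₙ)` about `x` the first `n` summands are constant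
and the others contribute at most `O(2⁻ⁿ dist(x, Gₙ)²)`, so `Mf f x r` is small for `r` about
`dist(x, Gₙ)`.
-/

open MeasureTheory Filter Set

/-- `Mf f x r = (1/r) * sup { |f x - f y| : |x - y| ≤ r }`. -/
noncomputable def Mf (f : ℝ → ℝ) (x r : ℝ) : ℝ :=
  sSup {d : ℝ | ∃ y : ℝ, |x - y| ≤ r ∧ d = |f x - f y|} / r

/-- The little Lipschitz function: `lip f x = liminf_{r→0⁺} Mf f x r`. -/
noncomputable def lip (f : ℝ → ℝ) (x : ℝ) : ℝ :=
  Filter.liminf (fun r => Mf f x r) (nhdsWithin 0 (Set.Ioi 0))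

/-- `E` is strongly one-sided dense at `x`. -/
def SOSDAt (E : Set ℝ) (x : ℝ) : Prop :=
  Filter.Tendsto
    (fun r => max ((volume (E ∩ Set.Icc (x - r) x)).toReal / r)
                  ((volume (E ∩ Set.Icc x (x + r))).toReal / r))
    (nhdsWithin 0 (Set.Ioi 0)) (nhds 1)

/-- `E` is strongly one-sided dense (SOSD). -/
def SOSD (E : Set ℝ) : Prop := ∀ x ∈ E, SOSDAt E x

/-- `E` is a `lip 1` set. -/
def IsLip1 (E : Set ℝ) : Prop :=
  ∃ f : ℝ → ℝ, Continuous f ∧ lip f = E.indicator (fun _ => (1 : ℝ))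

/-! ### Truncated distance and the set of zeros -/

/-- The distance to `G` truncated at `1`. It goes through `infEDist`, so that the distance to the
empty set is `1` rather than the value `0` of `Metric.infDist`. -/
noncomputable def truncDist (G : Set ℝ) (x : ℝ) : ℝ := (min 1 (Metric.infEDist x G)).toReal

lemma truncDist_nonneg (G : Set ℝ) (x : ℝ) : 0 ≤ truncDist G x := ENNReal.toReal_nonneg

lemma truncDist_le_one (G : Set ℝ) (x : ℝ) : truncDist G x ≤ 1 := by
  have := ENNReal.toReal_mono ENNReal.one_ne_top (min_le_left 1 (Metric.infEDist x G))
  simpa [truncDist] using this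

lemma truncDist_anti {G H : Set ℝ} (h : G ⊆ H) (x : ℝ) : truncDist H x ≤ truncDist G x := by
  refine ENNReal.toReal_mono (ne_top_of_le_ne_top ENNReal.one_ne_top (min_le_left _ _)) ?_
  exact min_le_min le_rfl (Metric.infEDist_anti h)

lemma truncDist_le_add (G : Set ℝ) (x y : ℝ) : truncDist G x ≤ truncDist G y + |x - y| := by
  have hy : min 1 (Metric.infEDist y G) ≠ ⊤ := ne_top_of_le_ne_top ENNReal.one_ne_top (min_le_left _ _)
  have h : min 1 (Metric.infEDist x G) ≤ min 1 (Metric.infEDist y G) + edist x y := by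
    rw [← min_add_add_right]
    exact min_le_min le_self_add Metric.infEDist_le_infEDist_add_edist
  have h2 := ENNReal.toReal_mono (ENNReal.add_ne_top.2 ⟨hy, edist_ne_top x y⟩) h
  rwa [ENNReal.toReal_add hy (edist_ne_top x y), ← dist_edist, Real.dist_eq] at h2

lemma truncDist_eq_zero {G : Set ℝ} {x : ℝ} (hx : x ∈ G) : truncDist G x = 0 := by
  simp [truncDist, Metric.infEDist_zero_of_mem hx]

lemma truncDist_pos {G : Set ℝ} (hG : IsClosed G) {x : ℝ} (hx : x ∉ G) : 0 < truncDist G x := by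
  refine ENNReal.toReal_pos ?_ (ne_top_of_le_ne_top ENNReal.one_ne_top (min_le_left _ _))
  intro h
  rcases min_choice 1 (Metric.infEDist x G) with h' | h' <;> rw [h'] at h
  · exact one_ne_zero h
  · exact hx ((Metric.mem_iff_infEDist_zero_of_closed hG).2 h)

/-- A maximal set whose distinct points are separated by at least the value of `h` at either of
them. It contains the zeros of `h`, because `h z ≤ |e - z| / 2` whenever `h e = 0`. -/
lemma exists_separated_dense (h : ℝ → ℝ) (h0 : ∀ x, 0 ≤ h x)
    (hl : ∀ x y, h x ≤ h y + |x - y| / 2) :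
    ∃ Z : Set ℝ, (∀ x, h x = 0 → x ∈ Z) ∧ (∀ x, ∃ z ∈ Z, |x - z| ≤ 2 * h x) ∧
      ∀ x, 0 < h x → ∃ δ > 0, ∀ z ∈ Z, |z - x| < δ → z = x := by
  obtain ⟨Z, hZ⟩ := zorn_subset {S : Set ℝ | S.Pairwise fun a b => h a ≤ |a - b|} (by
    intro c hc hch
    exact ⟨⋃₀ c, (Set.pairwise_sUnion hch.directedOn).2 fun s hs => hc hs,
      fun s hs => Set.subset_sUnion_of_mem hs⟩)
  have hZp : Z.Pairwise fun a b => h a ≤ |a - b| := hZ.prop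
  have hdense : ∀ x, ∃ z ∈ Z, |x - z| ≤ 2 * h x := by
    intro x
    by_contra! hcon
    have hxZ : x ∉ Z := fun hx => by
      have := hcon x hx
      simp at this
      linarith [h0 x]
    have hins : (insert x Z).Pairwise fun a b => h a ≤ |a - b| := by
      refine (Set.pairwise_insert).2 ⟨hZp, fun b hb _ => ?_⟩
      have h1 := hcon b hb
      have h2 := hl b x
      rw [abs_sub_comm b x] at h2 ⊢
      constructor <;> linarith [h0 x]
    exact hxZ (hZ.le_of_ge hins (Set.subset_insert x Z) (Set.mem_insert x Z))
  refine ⟨Z, fun x hx => ?_, hdense, fun x hx => ?_⟩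
  · obtain ⟨z, hz, hxz⟩ := hdense x
    rw [hx, mul_zero] at hxz
    have : x = z := sub_eq_zero.1 (abs_nonpos_iff.1 hxz)
    rwa [this]
  -- Two points of `Z` within `h x / 4` of `x` coincide; a single one other than `x` can be avoided.
  · by_cases hex : ∃ w ∈ Z, |w - x| < h x / 4 ∧ w ≠ x
    · obtain ⟨w, hw, hwx, hne⟩ := hex
      refine ⟨|w - x|, abs_pos.2 (sub_ne_zero.2 hne), fun z hz hzx => ?_⟩
      by_contra
      have hzw : w ≠ z := by rintro rfl; exact lt_irrefl _ hzx
      have h1 := hZp hw hz hzw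
      have h2 := hl x w
      have h3 := abs_sub_le w x z
      rw [abs_sub_comm x w] at h2
      rw [abs_sub_comm x z] at h3
      linarith
    · push Not at hex
      exact ⟨h x / 4, by positivity, fun z hz hzx => hex z hz hzx⟩

/-! ### Folding a primitive -/

/-- To the right of a point `s` that does not accumulate `S` from the right, the distance to `S` is
the minimum of the two affine functions `t - sup (S ∩ (-∞, s])` and `inf (S ∩ [s + η, ∞)) - t`, hence
affine of slope `±1` close to `s`. -/
lemma infDist_fold {S : Set ℝ} {s η : ℝ} (hη : 0 < η) (hS : ∀ u ∈ S, u ≤ s ∨ s + η ≤ u)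
    (hl : ∃ u ∈ S, u ≤ s) (hr : ∃ u ∈ S, s + η ≤ u) :
    ∃ δ > 0, ∀ t, s ≤ t → t ≤ s + δ → |Metric.infDist t S - Metric.infDist s S| = t - s := by
  obtain ⟨p, hpS, hp⟩ := hl
  obtain ⟨q, hqS, hq⟩ := hr
  set a := sSup (S ∩ Set.Iic s) with ha
  set b := sInf (S ∩ Set.Ici (s + η)) with hb
  have hane : (S ∩ Set.Iic s).Nonempty := ⟨p, hpS, hp⟩
  have hbne : (S ∩ Set.Ici (s + η)).Nonempty := ⟨q, hqS, hq⟩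
  have hbb : s + η ≤ b := le_csInf hbne fun u hu => hu.2
  have key : ∀ t, s ≤ t → t ≤ s + η → Metric.infDist t S = min (t - a) (b - t) := by
    intro t h1 h2
    apply le_antisymm
    · refine le_min ?_ ?_
      · have : a ≤ t - Metric.infDist t S := csSup_le hane fun u hu => by
          have h3 := Metric.infDist_le_dist_of_mem (x := t) hu.1
          have h4 : u ≤ s := hu.2
          rw [Real.dist_eq, abs_of_nonneg (by linarith)] at h3
          linarith
        linarith
      · have : t + Metric.infDist t S ≤ b := le_csInf hbne fun u hu => by
          have h3 := Metric.infDist_le_dist_of_mem (x := t) hu.1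
          have h4 : s + η ≤ u := hu.2
          rw [Real.dist_eq, abs_of_nonpos (by linarith)] at h3
          linarith
        linarith
    · refine (Metric.le_infDist ⟨p, hpS⟩).2 fun u hu => ?_
      rw [Real.dist_eq]
      rcases hS u hu with h | h
      · have : u ≤ a := le_csSup ⟨s, fun v hv => hv.2⟩ ⟨hu, h⟩
        exact (min_le_left _ _).trans (by linarith [le_abs_self (t - u)])
      · have : b ≤ u := csInf_le ⟨s + η, fun v hv => hv.2⟩ ⟨hu, h⟩
        exact (min_le_right _ _).trans (by linarith [neg_le_abs (t - u)])
  rcases lt_or_ge (s - a) (b - s) with h | h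
  · refine ⟨min η ((b - s - (s - a)) / 2), lt_min hη (by linarith), fun t h1 h2 => ?_⟩
    have h3 := min_le_left η ((b - s - (s - a)) / 2)
    have h4 := min_le_right η ((b - s - (s - a)) / 2)
    rw [key t h1 (by linarith), key s le_rfl (by linarith), min_eq_left (by linarith),
      min_eq_left (by linarith), abs_of_nonneg (by linarith)]
    ring
  · refine ⟨η, hη, fun t h1 h2 => ?_⟩
    rw [key t h1 h2, key s le_rfl (by linarith), min_eq_right (by linarith),
      min_eq_right (by linarith), abs_of_nonpos (by linarith)]
    ring

/-- Folding a monotone `1`-Lipschitz function `g` at the values on `Z` keeps its increments to the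
right of a point which is isolated from the rest of `Z` and has points of `Z` on both sides. -/
lemma fold_increment_right {g : ℝ → ℝ} (hg : Monotone g)
    (hL : ∀ x y, x ≤ y → g y - g x ≤ y - x) {Z : Set ℝ} {x δ : ℝ} (hδ : 0 < δ)
    (hZ : ∀ z ∈ Z, |z - x| < δ → z = x) (hl : ∃ z ∈ Z, z ≤ x) (hr : ∃ z ∈ Z, x + δ ≤ z) :
    ∃ ε > 0, ∀ y, x ≤ y → y ≤ x + ε →
      |Metric.infDist (g y) (g '' Z) - Metric.infDist (g x) (g '' Z)| = g y - g x := by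
  rcases (hg (show x ≤ x + δ by linarith)).eq_or_lt with h | h
  -- If `g` is constant on `[x, x + δ]`, there is no increment to keep.
  · refine ⟨δ, hδ, fun y h1 h2 => ?_⟩
    have : g y = g x := le_antisymm ((hg h2).trans h.ge) (hg h1)
    simp [this]
  · obtain ⟨ε, hε, H⟩ := infDist_fold (S := g '' Z) (s := g x) (η := g (x + δ) - g x)
      (by linarith) (by
        rintro _ ⟨z, hz, rfl⟩
        rcases le_or_gt z x with hzx | hzx
        · exact Or.inl (hg hzx)
        · right
          have : x + δ ≤ z := by
            by_contra! hlt
            have := hZ z hz (by rw [abs_of_pos (by linarith)]; linarith)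
            linarith
          linarith [hg this])
      (by obtain ⟨z, hz, hzx⟩ := hl; exact ⟨g z, ⟨z, hz, rfl⟩, hg hzx⟩)
      (by obtain ⟨z, hz, hzx⟩ := hr; exact ⟨g z, ⟨z, hz, rfl⟩, by linarith [hg hzx]⟩)
    exact ⟨ε, hε, fun y h1 h2 => H _ (hg h1) (by linarith [hL x y h1])⟩

lemma infDist_neg_image (g : ℝ → ℝ) (Z : Set ℝ) (x : ℝ) :
    Metric.infDist (-g x) ((fun t => -g (-t)) '' (Neg.neg '' Z)) = Metric.infDist (g x) (g '' Z) := by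
  have : (fun t => -g (-t)) '' (Neg.neg '' Z) = Neg.neg '' (g '' Z) := by
    rw [Set.image_image, Set.image_image]
    simp only [neg_neg]
  rw [this]
  exact Metric.infDist_image (Isometry.of_dist_eq fun a b => by simp [dist_neg_neg])

lemma fold_increment_left {g : ℝ → ℝ} (hg : Monotone g)
    (hL : ∀ x y, x ≤ y → g y - g x ≤ y - x) {Z : Set ℝ} {x δ : ℝ} (hδ : 0 < δ)
    (hZ : ∀ z ∈ Z, |z - x| < δ → z = x) (hl : ∃ z ∈ Z, z ≤ x - δ) (hr : ∃ z ∈ Z, x ≤ z) :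
    ∃ ε > 0, ∀ y, y ≤ x → x - ε ≤ y →
      |Metric.infDist (g y) (g '' Z) - Metric.infDist (g x) (g '' Z)| = g x - g y := by
  obtain ⟨ε, hε, H⟩ := fold_increment_right (g := fun t => -g (-t)) (Z := Neg.neg '' Z) (x := -x)
    (fun a b hab => neg_le_neg (hg (neg_le_neg hab)))
    (fun a b hab => by have := hL (-b) (-a) (by linarith); linarith) hδ
    (by
      rintro _ ⟨z, hz, rfl⟩ h
      rw [hZ z hz]
      rw [abs_sub_comm] at h
      convert h using 2
      ring)
    (by obtain ⟨z, hz, h⟩ := hr; exact ⟨-z, ⟨z, hz, rfl⟩, by linarith⟩)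
    (by obtain ⟨z, hz, h⟩ := hl; exact ⟨-z, ⟨z, hz, rfl⟩, by linarith⟩)
  refine ⟨ε, hε, fun y h1 h2 => ?_⟩
  have := H (-y) (by linarith) (by linarith)
  simp only [neg_neg] at this
  rw [infDist_neg_image, infDist_neg_image] at this
  rw [this]
  ring

lemma exists_primitive {A : Set ℝ} (hA : IsClosed A) :
    ∃ g : ℝ → ℝ, ∀ x y, x ≤ y → g y - g x = (volume (A ∩ Set.Icc x y)).toReal := by
  have hi : ∀ a b, IntervalIntegrable (A.indicator fun _ => (1 : ℝ)) volume a b := fun a b =>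
    ⟨(integrableOn_const (by simp)).indicator hA.measurableSet,
      (integrableOn_const (by simp)).indicator hA.measurableSet⟩
  refine ⟨fun x => ∫ t in (0 : ℝ)..x, A.indicator (fun _ => (1 : ℝ)) t, fun x y hxy => ?_⟩
  simp only
  rw [intervalIntegral.integral_interval_sub_left (hi _ _) (hi _ _),
    intervalIntegral.integral_of_le hxy, ← integral_Icc_eq_integral_Ioc,
    integral_indicator_const _ hA.measurableSet]
  simp [Measure.real, Measure.restrict_apply hA.measurableSet]

lemma toReal_volume_inter_Icc_le (A : Set ℝ) {x y : ℝ} (h : x ≤ y) :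
    (volume (A ∩ Set.Icc x y)).toReal ≤ y - x := by
  have h1 : volume (A ∩ Set.Icc x y) ≤ volume (Set.Icc x y) := measure_mono Set.inter_subset_right
  have h2 := ENNReal.toReal_mono (by simp) h1
  rwa [Real.volume_Icc, ENNReal.toReal_ofReal (by linarith)] at h2

/-- The folded primitive of `𝟙_A`, with amplitude controlled by the distance to `G`. -/
lemma exists_level {A G : Set ℝ} (hA : IsClosed A) (hG : IsClosed G) {c : ℝ} (hc : 0 < c)
    (hc1 : c ≤ 1) :
    ∃ f : ℝ → ℝ, (∀ x y, |f x - f y| ≤ |x - y|) ∧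
      (∀ x y, (∀ t ∈ A, t ∉ Set.uIcc x y) → f x = f y) ∧
      (∀ x, 0 ≤ f x ∧ f x ≤ c / 4 * truncDist G x ^ 2) ∧
      ∀ x ∉ G, ∃ δ > 0, ∀ r, 0 < r → r ≤ δ →
        |f (x + r) - f x| = (volume (A ∩ Set.Icc x (x + r))).toReal ∧
        |f (x - r) - f x| = (volume (A ∩ Set.Icc (x - r) x)).toReal := by
  obtain ⟨g, hg⟩ := exists_primitive hA
  have hmono : Monotone g := fun x y hxy => by
    have := hg x y hxy
    have := ENNReal.toReal_nonneg (a := volume (A ∩ Set.Icc x y))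
    linarith
  have hL : ∀ x y, x ≤ y → g y - g x ≤ y - x := fun x y hxy => by
    rw [hg x y hxy]; exact toReal_volume_inter_Icc_le A hxy
  have hLip : ∀ x y, |g x - g y| ≤ |x - y| := by
    intro x y
    rcases le_total x y with h | h
    · rw [abs_sub_comm, abs_sub_comm x, abs_of_nonneg (by linarith [hmono h]),
        abs_of_nonneg (by linarith)]
      exact hL x y h
    · rw [abs_of_nonneg (by linarith [hmono h]), abs_of_nonneg (by linarith)]
      exact hL y x h
  obtain ⟨Z, -, hZd, hZi⟩ := exists_separated_dense (fun x => c / 8 * truncDist G x ^ 2)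
    (fun x => by positivity) (by
      intro x y
      have h1 := truncDist_le_add G x y
      have h2 := truncDist_nonneg G x
      have h3 := truncDist_nonneg G y
      have h4 := truncDist_le_one G x
      have h5 := truncDist_le_one G y
      have h6 := abs_nonneg (x - y)
      have h7 : truncDist G x ^ 2 ≤ truncDist G y ^ 2 + 2 * |x - y| := by
        nlinarith
      nlinarith)
  have hZ1 : ∀ x, ∃ z ∈ Z, |x - z| ≤ 1 := fun x => by
    obtain ⟨z, hz, h⟩ := hZd x
    refine ⟨z, hz, h.trans ?_⟩
    have h2 := truncDist_nonneg G x
    have h4 := truncDist_le_one G x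
    have : truncDist G x ^ 2 ≤ 1 := by nlinarith
    nlinarith
  refine ⟨fun x => Metric.infDist (g x) (g '' Z), fun x y => ?_, fun x y h => ?_, fun x => ?_,
    fun x hx => ?_⟩
  · have := (Metric.lipschitz_infDist_pt (g '' Z)).dist_le_mul (g x) (g y)
    rw [Real.dist_eq, Real.dist_eq] at this
    simp only [NNReal.coe_one, one_mul] at this
    exact this.trans (hLip x y)
  · have : g x = g y := by
      rcases le_total x y with hxy | hxy
      · have h2 := hg x y hxy
        rw [Set.uIcc_of_le hxy] at h
        rw [show A ∩ Set.Icc x y = ∅ from Set.eq_empty_of_forall_notMem fun t ht => h t ht.1 ht.2]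
          at h2
        simp at h2
        linarith
      · have h2 := hg y x hxy
        rw [Set.uIcc_of_ge hxy] at h
        rw [show A ∩ Set.Icc y x = ∅ from Set.eq_empty_of_forall_notMem fun t ht => h t ht.1 ht.2]
          at h2
        simp at h2
        linarith
    simp [this]
  · refine ⟨Metric.infDist_nonneg, ?_⟩
    obtain ⟨z, hz, h⟩ := hZd x
    have h1 := Metric.infDist_le_dist_of_mem (x := g x) (Set.mem_image_of_mem g hz)
    rw [Real.dist_eq] at h1
    linarith [hLip x z]
  · have hpos := truncDist_pos hG hx
    obtain ⟨δ₀, hδ₀, hiso₀⟩ := hZi x (by positivity)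
    set δ := min δ₀ 1
    have hδ : 0 < δ := lt_min hδ₀ one_pos
    have hδ1 : δ ≤ 1 := min_le_right _ _
    have hiso : ∀ z ∈ Z, |z - x| < δ → z = x := fun z hz h =>
      hiso₀ z hz (h.trans_le (min_le_left _ _))
    obtain ⟨p, hp, hpx⟩ := hZ1 (x - 2)
    obtain ⟨q, hq, hqx⟩ := hZ1 (x + 2)
    rw [abs_le] at hpx hqx
    obtain ⟨ε₁, hε₁, H₁⟩ := fold_increment_right hmono hL hδ hiso ⟨p, hp, by linarith⟩
      ⟨q, hq, by linarith⟩
    obtain ⟨ε₂, hε₂, H₂⟩ := fold_increment_left hmono hL hδ hiso ⟨p, hp, by linarith⟩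
      ⟨q, hq, by linarith⟩
    refine ⟨min ε₁ ε₂, lt_min hε₁ hε₂, fun r hr hrε => ⟨?_, ?_⟩⟩
    · rw [← hg x (x + r) (by linarith)]
      exact H₁ _ (by linarith) (by linarith [min_le_left ε₁ ε₂])
    · rw [← hg (x - r) x (by linarith)]
      exact H₂ _ (by linarith) (by linarith [min_le_right ε₁ ε₂])

/-! ### Estimates for `Mf` and `lip` -/

lemma Mf_le {f : ℝ → ℝ} {x r C : ℝ} (hr : 0 < r) (h : ∀ y, |x - y| ≤ r → |f x - f y| ≤ C * r) :
    Mf f x r ≤ C := by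
  rw [Mf, div_le_iff₀ hr]
  refine csSup_le ⟨_, x, by simpa using hr.le, rfl⟩ ?_
  rintro _ ⟨y, hy, rfl⟩
  exact h y hy

lemma le_Mf {f : ℝ → ℝ} (hf : Continuous f) {x y r : ℝ} (hr : 0 < r) (hy : |x - y| ≤ r) :
    |f x - f y| / r ≤ Mf f x r := by
  rw [Mf]
  refine div_le_div_of_nonneg_right (le_csSup ?_ ⟨y, hy, rfl⟩) hr.le
  have := (isCompact_closedBall x r).bddAbove_image (f := fun y => |f x - f y|)
    (by fun_prop)
  refine this.mono ?_
  rintro _ ⟨z, hz, rfl⟩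
  exact ⟨z, by rwa [Metric.mem_closedBall, dist_comm, Real.dist_eq], rfl⟩

lemma Mf_nonneg (f : ℝ → ℝ) (x : ℝ) {r : ℝ} (hr : 0 < r) : 0 ≤ Mf f x r := by
  refine div_nonneg (Real.sSup_nonneg ?_) hr.le
  rintro _ ⟨y, -, rfl⟩
  exact abs_nonneg _

lemma lip_eq_zero {f : ℝ → ℝ} {x : ℝ}
    (h : ∀ ε > 0, ∀ η > 0, ∃ r, 0 < r ∧ r < η ∧ Mf f x r ≤ ε) : lip f x = 0 := by
  have h0 : ∀ᶠ r in nhdsWithin (0 : ℝ) (Set.Ioi 0), 0 ≤ Mf f x r := by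
    filter_upwards [self_mem_nhdsWithin] with r hr using Mf_nonneg f x hr
  have hub : ∀ a, (∀ᶠ r in nhdsWithin (0 : ℝ) (Set.Ioi 0), a ≤ Mf f x r) → a ≤ 0 := by
    intro a ha
    refine le_of_forall_pos_le_add fun ε hε => ?_
    obtain ⟨η, hη, H⟩ := (mem_nhdsGT_iff_exists_Ioo_subset).1 ha
    obtain ⟨r, hr, hrη, hM⟩ := h ε hε η hη
    have : a ≤ Mf f x r := H ⟨hr, hrη⟩
    linarith
  rw [lip, Filter.liminf_eq]
  exact le_antisymm (csSup_le ⟨0, h0⟩ hub) (le_csSup ⟨0, hub⟩ h0)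

lemma abs_tsum_le {u : ℕ → ℝ} {C : ℝ} (h : ∀ k, |u k| ≤ (1 / 2) ^ k * C) :
    |∑' k, u k| ≤ 2 * C :=
  tsum_of_norm_bounded (f := u) (hasSum_geometric_two.mul_right C) h

theorem union_closed_SOSD_isLip1 (E : Set ℝ) (En : ℕ → Set ℝ)
    (hclosed : ∀ n, IsClosed (En n)) (hsosd : ∀ n, SOSD (En n))
    (hE : E = ⋃ n, En n) :
    ∃ f : ℝ → ℝ, Continuous f ∧ lip f = E.indicator (fun _ => (1 : ℝ)) := by
  classical
  set G : ℕ → Set ℝ := fun n => ⋃ i ∈ Finset.range n, En i with hGdef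
  have hGc : ∀ n, IsClosed (G n) := fun n =>
    (Finset.range n).finite_toSet.isClosed_biUnion fun i _ => hclosed i
  have hsub : ∀ {i n}, i < n → En i ⊆ G n := fun {i n} h x hx =>
    Set.mem_biUnion (Finset.mem_range.2 h) hx
  have hGm : ∀ {m n}, m ≤ n → G m ⊆ G n := fun {m n} h =>
    Set.biUnion_subset_biUnion_left fun i hi =>
      Finset.mem_range.2 ((Finset.mem_range.1 hi).trans_le h)
  choose F hFL hFc hFb hFi using fun n => exists_level (hclosed n) (hGc n)
    (c := (1 / 4) ^ n) (by positivity) (pow_le_one₀ (by norm_num) (by norm_num))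
  have h4 : ∀ k : ℕ, ((1 : ℝ) / 4) ^ k = (1 / 2) ^ k * (1 / 2) ^ k := fun k => by
    rw [← mul_pow]; norm_num
  have hhalf : ∀ k : ℕ, ((1 : ℝ) / 2) ^ k ≤ 1 := fun k => pow_le_one₀ (by norm_num) (by norm_num)
  have hFnorm : ∀ k x, ‖F k x‖ ≤ (1 / 2) ^ k := by
    intro k x
    rw [Real.norm_eq_abs, abs_of_nonneg (hFb k x).1]
    have h1 := (hFb k x).2
    have h2 := truncDist_nonneg (G k) x
    have h3 : truncDist (G k) x ^ 2 ≤ 1 := by nlinarith [truncDist_le_one (G k) x]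
    have h5 : (0 : ℝ) < (1 / 2) ^ k := by positivity
    rw [h4] at h1
    have h6 : ((1 : ℝ) / 2) ^ k * (1 / 2) ^ k ≤ (1 / 2) ^ k := by nlinarith [hhalf k]
    nlinarith
  have hsum : ∀ x, Summable fun k => F k x := fun x =>
    Summable.of_norm_bounded summable_geometric_two fun k => hFnorm k x
  have hFcont : ∀ k, Continuous (F k) := fun k =>
    (LipschitzWith.of_dist_le_mul (K := 1) fun x y => by
      simpa [Real.dist_eq] using hFL k x y).continuous
  set f : ℝ → ℝ := fun x => ∑' k, F k x with hf
  have hfcont : Continuous f := continuous_tsum hFcont summable_geometric_two hFnorm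
  have hconst : ∀ x n y, |y - x| < truncDist (G n) x → ∀ k < n, F k y = F k x := by
    intro x n y hy k hk
    refine hFc k y x fun t ht htu => ?_
    have h1 := truncDist_le_add (G n) x t
    rw [truncDist_eq_zero (hsub hk ht)] at h1
    have h2 := Set.abs_sub_right_of_mem_uIcc htu
    have h3 := abs_sub_comm x y
    linarith
  refine ⟨f, hfcont, funext fun x => ?_⟩
  by_cases hx : x ∈ E
  · rw [Set.indicator_of_mem hx]
    have hex : ∃ n, x ∈ En n := by simpa [hE] using hx
    set n := Nat.find hex
    have hxn : x ∈ En n := Nat.find_spec hex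
    have hxG : x ∉ G n := by
      intro h
      obtain ⟨i, hi, hxi⟩ := Set.mem_iUnion₂.1 h
      exact Nat.find_min hex (Finset.mem_range.1 hi) hxi
    have hd := truncDist_pos (hGc n) hxG
    -- All summands but the `n`-th contribute a quadratic error.
    have herr : ∀ y, |y - x| < truncDist (G n) x →
        |(f y - f x) - (F n y - F n x)| ≤ 2 * |y - x| ^ 2 := by
      intro y hy
      have hs : Summable fun k => F k y - F k x := (hsum y).sub (hsum x)
      have e1 : f y - f x = ∑' k, (F k y - F k x) := ((hsum y).tsum_sub (hsum x)).symm
      rw [e1, hs.tsum_eq_add_tsum_ite n, add_sub_cancel_left]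
      refine abs_tsum_le fun k => ?_
      rcases lt_trichotomy k n with hk | hk | hk
      · rw [hconst x n y hy k hk]
        simp only [sub_self, ite_self, abs_zero]
        positivity
      · simp only [hk, if_true, abs_zero]
        positivity
      · rw [if_neg hk.ne']
        have hx0 : truncDist (G k) x = 0 := truncDist_eq_zero (hsub hk hxn)
        have b1 := hFb k x
        have b2 := hFb k y
        rw [hx0] at b1
        have b3 := truncDist_le_add (G k) y x
        rw [hx0, zero_add] at b3
        have b4 : F k x = 0 := le_antisymm (by simpa using b1.2) b1.1
        rw [b4, sub_zero, abs_of_nonneg b2.1]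
        have b5 : truncDist (G k) y ^ 2 ≤ |y - x| ^ 2 :=
          pow_le_pow_left₀ (truncDist_nonneg _ _) b3 2
        have b6 : ((1 : ℝ) / 4) ^ k / 4 ≤ (1 / 2) ^ k := by
          have : (0 : ℝ) < (1 / 2) ^ k := by positivity
          rw [h4]
          nlinarith [hhalf k]
        exact b2.2.trans (mul_le_mul b6 b5 (by positivity) (by positivity))
    obtain ⟨δ, hδ, hinc⟩ := hFi n x hxG
    have hlim : Tendsto (fun r => Mf f x r) (nhdsWithin 0 (Set.Ioi 0)) (nhds 1) := by
      have hr0 : Tendsto (fun r : ℝ => 2 * r) (nhdsWithin 0 (Set.Ioi 0)) (nhds 0) := by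
        have : Tendsto (fun r : ℝ => 2 * r) (nhds 0) (nhds (2 * 0)) :=
          (continuous_const.mul continuous_id).tendsto 0
        rw [mul_zero] at this
        exact this.mono_left nhdsWithin_le_nhds
      have hlo := (hsosd n x hxn).sub hr0
      have hhi := (tendsto_const_nhds (x := (1 : ℝ))).add hr0
      rw [sub_zero] at hlo
      rw [add_zero] at hhi
      have hev : ∀ᶠ r in nhdsWithin (0 : ℝ) (Set.Ioi 0),
          0 < r ∧ r < min δ (truncDist (G n) x) := by
        filter_upwards [Ioo_mem_nhdsGT (lt_min hδ hd)] with r hr using hr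
      refine tendsto_of_tendsto_of_tendsto_of_le_of_le' hlo hhi ?_ ?_
      · filter_upwards [hev] with r hr
        obtain ⟨hr0, hr1⟩ := hr
        obtain ⟨i1, i2⟩ := hinc r hr0 (hr1.le.trans (min_le_left _ _))
        have hrd := hr1.trans_le (min_le_right _ _)
        rw [sub_le_iff_le_add]
        have step : ∀ y V, |y - x| = r → |F n y - F n x| = V → V / r ≤ Mf f x r + 2 * r := by
          intro y V hy hV
          have m1 := le_Mf hfcont (x := x) (y := y) hr0 (by rw [abs_sub_comm, hy])
          have m2 := herr y (by rwa [hy])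
          have m3 := abs_sub_abs_le_abs_sub (F n y - F n x) (f y - f x)
          rw [abs_sub_comm (F n y - F n x), hV] at m3
          rw [hy] at m2
          rw [abs_sub_comm, div_le_iff₀ hr0] at m1
          rw [div_le_iff₀ hr0]
          nlinarith
        refine max_le (step (x - r) _ ?_ i2) (step (x + r) _ ?_ i1)
        · rw [show x - r - x = -r by ring, abs_neg, abs_of_pos hr0]
        · rw [show x + r - x = r by ring, abs_of_pos hr0]
      · filter_upwards [hev] with r hr
        obtain ⟨hr0, hr1⟩ := hr
        have hrd := hr1.trans_le (min_le_right _ _)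
        refine Mf_le hr0 fun y hy => ?_
        rw [abs_sub_comm] at hy ⊢
        have m2 := herr y (hy.trans_lt hrd)
        have m3 := abs_sub_abs_le_abs_sub (f y - f x) (F n y - F n x)
        have m4 := hFL n y x
        have m5 := abs_nonneg (y - x)
        nlinarith
    exact hlim.liminf_eq
  · rw [Set.indicator_of_notMem hx]
    have hxG : ∀ n, x ∉ G n := by
      intro n h
      obtain ⟨i, -, hxi⟩ := Set.mem_iUnion₂.1 h
      exact hx (hE ▸ Set.mem_iUnion.2 ⟨i, hxi⟩)
    have hosc : ∀ n y, |y - x| < truncDist (G n) x →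
        |f y - f x| ≤ 2 * ((1 / 2) ^ n * truncDist (G n) x ^ 2) := by
      intro n y hy
      have e1 : f y - f x = ∑' k, (F k y - F k x) := ((hsum y).tsum_sub (hsum x)).symm
      rw [e1]
      refine abs_tsum_le fun k => ?_
      rcases lt_or_ge k n with hk | hk
      · rw [hconst x n y hy k hk, sub_self, abs_zero]
        have := truncDist_nonneg (G n) x
        positivity
      · set d := truncDist (G n) x
        have b1 := hFb k x
        have b2 := hFb k y
        have c1 : truncDist (G k) x ≤ 2 * d := by
          linarith [truncDist_anti (hGm hk) x, truncDist_nonneg (G n) x]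
        have c2 : truncDist (G k) y ≤ 2 * d := by
          linarith [truncDist_anti (hGm hk) y, truncDist_le_add (G n) y x]
        have c3 := pow_le_pow_left₀ (truncDist_nonneg _ _) c1 2
        have c4 := pow_le_pow_left₀ (truncDist_nonneg _ _) c2 2
        have c5 : (0 : ℝ) < (1 / 4) ^ k / 4 := by positivity
        have c6 := mul_le_mul_of_nonneg_left c3 c5.le
        have c7 := mul_le_mul_of_nonneg_left c4 c5.le
        have c8 : ((1 : ℝ) / 4) ^ k * d ^ 2 ≤ (1 / 2) ^ k * ((1 / 2) ^ n * d ^ 2) := by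
          rw [h4, mul_assoc]
          have : ((1 : ℝ) / 2) ^ k ≤ (1 / 2) ^ n :=
            pow_le_pow_of_le_one (by norm_num) (by norm_num) hk
          gcongr
        refine le_trans ?_ c8
        rw [abs_le]
        constructor <;> nlinarith
    refine lip_eq_zero fun ε hε η hη => ?_
    obtain ⟨n, hn⟩ := exists_pow_lt_of_lt_one (show 0 < ε / 4 * min η 1 by positivity)
      (show (1 / 2 : ℝ) < 1 by norm_num)
    have hd := truncDist_pos (hGc n) (hxG n)
    have hd1 := truncDist_le_one (G n) x
    set d := truncDist (G n) x with hddef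
    have hm : 0 < min η d := lt_min hη hd
    have hml := min_le_left η d
    have hmr := min_le_right η d
    refine ⟨min η d / 2, by positivity, by linarith, Mf_le (by positivity) fun y hy => ?_⟩
    rw [abs_sub_comm] at hy ⊢
    have ho := hosc n y (by linarith)
    refine ho.trans ?_
    -- As `d ≤ 1`, the factor `d` turns `min η 1` into something at most `min η d`.
    have k1 : min η 1 * d ^ 2 ≤ min η d := by
      have e1 := min_le_left η 1
      have e2 := min_le_right η 1
      have e3 : d ^ 2 ≤ d := by nlinarith
      have e4 : d ^ 2 ≤ 1 := by linarith
      refine le_min ?_ ?_ <;> nlinarith [sq_nonneg d]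
    have k2 : (1 / 2) ^ n * d ^ 2 ≤ ε / 4 * min η 1 * d ^ 2 :=
      mul_le_mul_of_nonneg_right hn.le (sq_nonneg d)
    have k3 : ε / 4 * (min η 1 * d ^ 2) ≤ ε / 4 * min η d :=
      mul_le_mul_of_nonneg_left k1 (by positivity)
    linarith
end

section
/- There exists a closed subset F of [0,1] of positive Lebesgue measure such that F does not contain any nonempty, closed, strongly one-sided dense subset. -/
/-!
The set `F` is `[0, 1]` minus a small open neighbourhood of all copies `p + q • cantorSet` of the
Cantor set with `p, q` rational; these copies are countably many null sets, so `F` can be given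
positive measure.

Let `E ⊆ F` be nonempty, closed and SOSD. If `x ∈ E` lies in an interval `[a, a + ℓ]` whose two
outer thirds miss `E`, then at scale `ℓ` both one-sided densities of `E` at `x` are at most `2/3`
(`density_le_of_not_meetsOuterThirds`). So each `x ∈ E` lies in no such interval of small length,
and by Baire category the bound on the length can be taken uniform on a portion of `E`
(`exists_portion`). Choose a rational interval `[p, p + q]` around a point of that portion, shorter
than the bound. Starting from it, one can repeatedly pass to an outer third that still meets `E`.
The intervals met in this way are those of the Cantor construction, so by compactness `E` meets
`p + q • cantorSet` (`exists_mem_cantorSet`), which `F` avoids.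
-/

open MeasureTheory Filter Set

/-- The set `E` meets the first or the last closed third of `[a, a + ℓ]`. -/
def MeetsOuterThirds (E : Set ℝ) (a ℓ : ℝ) : Prop :=
  (E ∩ Icc a (a + ℓ / 3)).Nonempty ∨ (E ∩ Icc (a + 2 * ℓ / 3) (a + ℓ)).Nonempty

open scoped Pointwise in
lemma volume_cantorSet : volume cantorSet = 0 := by
  have hfin : volume cantorSet ≠ ⊤ := isCompact_cantorSet.measure_lt_top.ne
  have h1 : volume ((fun x : ℝ => x / 3) '' cantorSet)
      = ENNReal.ofReal (1 / 3) * volume cantorSet := by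
    have : (fun x : ℝ => x / 3) '' cantorSet = (1 / 3 : ℝ) • cantorSet := by
      ext y; simp [Set.mem_smul_set, div_eq_inv_mul]
    rw [this, Measure.addHaar_smul_of_nonneg _ (by norm_num)]
    simp
  have h2 : volume ((fun x : ℝ => (2 + x) / 3) '' cantorSet)
      = ENNReal.ofReal (1 / 3) * volume cantorSet := by
    have : (fun x : ℝ => (2 + x) / 3) '' cantorSet
        = (fun y => 2 / 3 + y) '' ((fun x : ℝ => x / 3) '' cantorSet) := by
      rw [image_image]; congr 1; ext x; ring
    rw [this, image_add_left, measure_preimage_add, h1]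
  -- `C = C / 3 ∪ (2 + C) / 3` gives `|C| ≤ 2 / 3 * |C|`.
  have h3 : volume cantorSet ≤ ENNReal.ofReal (1 / 3) * volume cantorSet
      + ENNReal.ofReal (1 / 3) * volume cantorSet := by
    conv_lhs => rw [cantorSet_eq_union_halves]
    exact (measure_union_le _ _).trans (by rw [h1, h2])
  lift volume cantorSet to NNReal using hfin with m
  have h4 := ENNReal.toReal_mono (by finiteness) h3
  rw [ENNReal.toReal_add (by finiteness) (by finiteness), ENNReal.toReal_mul,
    ENNReal.toReal_ofReal (by norm_num)] at h4
  simp only [ENNReal.coe_toReal] at h4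
  have : (m : ℝ) = 0 := le_antisymm (by linarith) m.2
  exact_mod_cast this

open scoped Pointwise in
lemma volume_rational_copies_cantorSet :
    volume (⋃ z : ℚ × ℚ, (fun y : ℝ => (z.1 : ℝ) + z.2 * y) '' cantorSet) = 0 := by
  refine measure_iUnion_null fun z => ?_
  have : (fun y : ℝ => (z.1 : ℝ) + z.2 * y) '' cantorSet
      = (fun y => (z.1 : ℝ) + y) '' ((z.2 : ℝ) • cantorSet) := by
    rw [← image_smul, image_image]; rfl
  rw [this, image_add_left, measure_preimage_add, Measure.addHaar_smul, volume_cantorSet, mul_zero]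

lemma volume_inter_Icc_toReal_le {E : Set ℝ} {u c d v : ℝ} (huc : u ≤ c) (hdv : d ≤ v)
    (h : ¬ (E ∩ Icc c d).Nonempty) :
    (volume (E ∩ Icc u v)).toReal ≤ (c - u) + (v - d) := by
  have hsub : E ∩ Icc u v ⊆ Icc u c ∪ Icc d v := by
    rintro x ⟨hx, hu, hv⟩
    by_cases hc : x ≤ c
    · exact Or.inl ⟨hu, hc⟩
    · refine Or.inr ⟨?_, hv⟩
      by_contra! hd
      exact h ⟨x, hx, (not_le.1 hc).le, hd.le⟩
  refine ENNReal.toReal_le_of_le_ofReal (by linarith) ?_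
  refine (measure_mono hsub).trans ((measure_union_le _ _).trans ?_)
  rw [Real.volume_Icc, Real.volume_Icc, ENNReal.ofReal_add (by linarith) (by linarith)]

/-- If the outer thirds of an interval of length `ℓ` around `x ∈ E` miss `E`, then each of
`[x - ℓ, x]` and `[x, x + ℓ]` contains one of those thirds, so `E` has one-sided densities at most
`2 / 3` at `x` at scale `ℓ`. -/
lemma density_le_of_not_meetsOuterThirds {E : Set ℝ} {x a ℓ : ℝ} (hℓ : 0 < ℓ) (hx : x ∈ E)
    (hxI : x ∈ Icc a (a + ℓ)) (h : ¬ MeetsOuterThirds E a ℓ) :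
    max ((volume (E ∩ Icc (x - ℓ) x)).toReal / ℓ)
      ((volume (E ∩ Icc x (x + ℓ))).toReal / ℓ) ≤ 2 / 3 := by
  obtain ⟨h1, h2⟩ := not_or.1 h
  have hx1 : a + ℓ / 3 ≤ x := by
    by_contra! hlt; exact h1 ⟨x, hx, hxI.1, hlt.le⟩
  have hx2 : x ≤ a + 2 * ℓ / 3 := by
    by_contra! hlt; exact h2 ⟨x, hx, hlt.le, hxI.2⟩
  refine max_le ?_ ?_ <;> rw [div_le_iff₀ hℓ]
  · have := volume_inter_Icc_toReal_le (u := x - ℓ) (v := x) (by linarith [hxI.2]) hx1 h1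
    linarith
  · have := volume_inter_Icc_toReal_le (u := x) (v := x + ℓ) hx2 (by linarith [hxI.1]) h2
    linarith

/-- For some `x₀ ∈ E` and `δ > 0`, every interval of length less
than `δ` that contains a point of `E ∩ (x₀ - δ, x₀ + δ)` has an outer third meeting `E`. -/
lemma exists_portion {E : Set ℝ} (hne : E.Nonempty) (hcl : IsClosed E) (hE : SOSD E) :
    ∃ x₀ ∈ E, ∃ δ > 0, ∀ x ∈ E, |x - x₀| < δ → ∀ a ℓ, 0 < ℓ → ℓ < δ → x ∈ Icc a (a + ℓ) →
      MeetsOuterThirds E a ℓ := by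
  -- `bad n` is the union of the (open) intervals of length less than `1 / (n + 1)` whose outer
  -- thirds miss `E`; it is open, and every point of `E` is outside `bad n` for large `n`.
  let bad : ℕ → Set ℝ := fun n =>
    ⋃ (a : ℝ) (ℓ : ℝ) (_ : 0 < ℓ ∧ ℓ < 1 / ((n : ℝ) + 1) ∧ ¬ MeetsOuterThirds E a ℓ),
      Ioo a (a + ℓ)
  have hbad : ∀ n, IsOpen (bad n) := fun n =>
    isOpen_iUnion fun a => isOpen_iUnion fun ℓ => isOpen_iUnion fun _ => isOpen_Ioo
  have : Nonempty E := hne.to_subtype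
  have : CompleteSpace E := hcl.completeSpace_coe
  have hcover : ⋃ n, {x : E | (x : ℝ) ∉ bad n} = univ := by
    refine eq_univ_of_forall fun x => ?_
    have hev := (hE x x.2).eventually (lt_mem_nhds (show (2 / 3 : ℝ) < 1 by norm_num))
    obtain ⟨δ, hδ, hsub⟩ := mem_nhdsGT_iff_exists_Ioo_subset.1 hev
    obtain ⟨n, hn⟩ := exists_nat_one_div_lt (show (0 : ℝ) < δ from hδ)
    refine mem_iUnion.2 ⟨n, fun hx => ?_⟩
    simp only [bad, mem_iUnion] at hx
    obtain ⟨a, ℓ, ⟨h0, h1, h2⟩, hx⟩ := hx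
    exact absurd (density_le_of_not_meetsOuterThirds h0 x.2 ⟨hx.1.le, hx.2.le⟩ h2)
      (not_le.2 (hsub ⟨h0, h1.trans hn⟩))
  obtain ⟨n, x₀, hx₀⟩ := nonempty_interior_of_iUnion_of_closed
    (fun n => (hbad n).isClosed_compl.preimage continuous_subtype_val) hcover
  obtain ⟨ε, hε, hball⟩ := Metric.mem_nhds_iff.1 (mem_interior_iff_mem_nhds.1 hx₀)
  refine ⟨x₀, x₀.2, min ε (1 / ((n : ℝ) + 1)), lt_min hε (by positivity), ?_⟩
  intro x hx hxε a ℓ hℓ hℓn hxI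
  by_contra hm
  have hxbad : x ∉ bad n := hball (show (⟨x, hx⟩ : E) ∈ Metric.ball x₀ ε from
    hxε.trans_le (min_le_left _ _))
  -- The endpoints of `[a, a + ℓ]` lie in its outer thirds, so `x` is interior.
  have hxa : a < x := by
    by_contra! hle
    exact hm (Or.inl ⟨x, hx, hxI.1, by linarith⟩)
  have hxb : x < a + ℓ := by
    by_contra! hle
    exact hm (Or.inr ⟨x, hx, by linarith, hxI.2⟩)
  refine hxbad ?_
  simp only [bad, mem_iUnion]
  exact ⟨a, ℓ, ⟨hℓ, hℓn.trans_le (min_le_right _ _), hm⟩, hxa, hxb⟩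

/-- If `[a, a + ℓ]` meets `E` and each of its subintervals meeting `E` has an outer third meeting `E`, then every
stage of the Cantor construction on `[a, a + ℓ]` meets `E`. -/
lemma exists_mem_preCantorSet {E : Set ℝ} (n : ℕ) : ∀ {a ℓ : ℝ}, 0 < ℓ →
    (∀ b m, 0 < m → a ≤ b → b + m ≤ a + ℓ → (E ∩ Icc b (b + m)).Nonempty →
      MeetsOuterThirds E b m) →
    (E ∩ Icc a (a + ℓ)).Nonempty → ∃ y ∈ preCantorSet n, a + ℓ * y ∈ E := by
  induction n with
  | zero =>
    rintro a ℓ hℓ - ⟨x, hx, hxa, hxb⟩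
    refine ⟨(x - a) / ℓ, ⟨div_nonneg (by linarith) hℓ.le, (div_le_one hℓ).2 (by linarith)⟩, ?_⟩
    rwa [mul_div_cancel₀ _ hℓ.ne', add_sub_cancel]
  | succ n ih =>
    intro a ℓ hℓ h hmeet
    rcases h a ℓ hℓ le_rfl le_rfl hmeet with h1 | h2
    · obtain ⟨y, hy, hyE⟩ := ih (a := a) (ℓ := ℓ / 3) (by positivity)
        (fun b m hm hb hbm => h b m hm hb (by linarith)) h1
      exact ⟨y / 3, Or.inl ⟨y, hy, rfl⟩, by convert hyE using 1; ring⟩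
    · obtain ⟨y, hy, hyE⟩ := ih (a := a + 2 * ℓ / 3) (ℓ := ℓ / 3) (by positivity)
        (fun b m hm hb hbm => h b m hm (by linarith) (by linarith))
        (by convert h2 using 3; ring)
      exact ⟨(2 + y) / 3, Or.inr ⟨y, hy, rfl⟩, by convert hyE using 1; ring⟩

lemma exists_mem_cantorSet {E : Set ℝ} (hcl : IsClosed E) {a ℓ : ℝ} (hℓ : 0 < ℓ)
    (h : ∀ b m, 0 < m → a ≤ b → b + m ≤ a + ℓ → (E ∩ Icc b (b + m)).Nonempty →
      MeetsOuterThirds E b m)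
    (hmeet : (E ∩ Icc a (a + ℓ)).Nonempty) : ∃ y ∈ cantorSet, a + ℓ * y ∈ E := by
  have hclE : IsClosed {y : ℝ | a + ℓ * y ∈ E} := hcl.preimage (by fun_prop)
  obtain ⟨y, hy⟩ := IsCompact.nonempty_iInter_of_sequence_nonempty_isCompact_isClosed
    (fun n => preCantorSet n ∩ {y : ℝ | a + ℓ * y ∈ E})
    (fun n => inter_subset_inter_left _ (preCantorSet_antitone n.le_succ))
    (fun n => exists_mem_preCantorSet n hℓ h hmeet)
    (isCompact_Icc.inter_right hclE)
    (fun n => (isClosed_preCantorSet n).inter hclE)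
  have hy := mem_iInter.1 hy
  exact ⟨y, mem_iInter.2 fun n => (hy n).1, (hy 0).2⟩

/-- A nonempty closed SOSD set meets some rational affine copy of the Cantor set. -/
lemma exists_mem_rational_copy {E : Set ℝ} (hne : E.Nonempty) (hcl : IsClosed E) (hE : SOSD E) :
    ∃ p q : ℚ, ∃ y ∈ cantorSet, (p : ℝ) + q * y ∈ E := by
  obtain ⟨x₀, hx₀, δ, hδ, h⟩ := exists_portion hne hcl hE
  obtain ⟨q, hq0, hqδ⟩ := exists_rat_btwn hδ
  obtain ⟨p, hp1, hp2⟩ := exists_rat_btwn (show x₀ - (q : ℝ) < x₀ by linarith)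
  obtain ⟨y, hy, hyE⟩ := exists_mem_cantorSet (a := p) (ℓ := q) hcl hq0 (by
    rintro b m hm hb hbm ⟨x, hx, hxb⟩
    refine h x hx ?_ b m hm (by linarith) hxb
    rw [abs_lt]
    constructor <;> linarith [hxb.1, hxb.2]) ⟨x₀, hx₀, hp2.le, by linarith⟩
  exact ⟨p, q, y, hy, hyE⟩

theorem exists_closed_posMeasure_no_SOSD_subset :
    ∃ F : Set ℝ, F ⊆ Set.Icc 0 1 ∧ IsClosed F ∧ 0 < volume F ∧
      ¬ ∃ F' : Set ℝ, F' ⊆ F ∧ F'.Nonempty ∧ IsClosed F' ∧ SOSD F' := by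
  obtain ⟨U, hCU, hUo, hU⟩ := Set.exists_isOpen_lt_of_lt
    (⋃ z : ℚ × ℚ, (fun y : ℝ => (z.1 : ℝ) + z.2 * y) '' cantorSet) 1
    (by rw [volume_rational_copies_cantorSet]; exact one_pos)
  refine ⟨Icc 0 1 \ U, sdiff_subset, isClosed_Icc.sdiff hUo, ?_, ?_⟩
  · refine lt_of_lt_of_le ?_ le_measure_sdiff
    rw [Real.volume_Icc]
    simpa using hU
  · rintro ⟨E, hEF, hne, hcl, hE⟩
    obtain ⟨p, q, y, hy, hyE⟩ := exists_mem_rational_copy hne hcl hE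
    exact (hEF hyE).2 (hCU (mem_iUnion.2 ⟨(p, q), y, hy, rfl⟩))
end

section
/- There exists a nowhere dense, perfect (closed with no isolated points) subset F of [0,1] of positive Lebesgue measure such that F does not contain any nonempty, closed, strongly one-sided dense subset. -/
/-!
The set `F` is obtained from `[0,1]` by deleting, from every interval `(p, q)` with rational
endpoints, the (open) `k`-th stage of the middle-third Cantor construction in `(p, q)`, where `k`
depends on `(p, q)` and is so large that the deleted sets have total measure less than `1`.

Deleting such a stage is cheap, but it spoils one-sided density in all of `(p, q)`: if a set has
no points in the left and right thirds of an interval, then at each point of the middle third at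
least half of the mass is missing on both sides at the scale of two thirds of the interval.
So a set which avoids the two outer thirds, and at each of whose points one of the one-sided
densities exceeds `1/2` at every scale up to the length of the interval, avoids the middle third too. By induction on `k`, avoiding the `k`-th Cantor
stage forces such a set to avoid the whole interval (`disjoint_Ioo_of_disjoint_cantorStage`).

For a closed strongly one-sided dense set the scale below which one of the densities exceeds `1/2`
depends on the point, but by the Baire category theorem a single scale serves a dense set of
points in some nonempty relatively open portion (`exists_uniform_scale`); this is all that the
induction needs, and applying it to a short rational interval around a point of that portion gives
a contradiction. The perfect kernel of the resulting closed set has the same measure, which takes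
care of isolated points.
-/

open MeasureTheory Filter Set

/-- The `k`-th stage of the middle-third Cantor construction in `(a, a + L)`, built from open
intervals: `2 ^ k` open intervals of length `L / 3 ^ k`. It is empty if `L ≤ 0`. -/
def cantorStage : ℕ → ℝ → ℝ → Set ℝ
  | 0, a, L => Set.Ioo a (a + L)
  | k + 1, a, L => cantorStage k a (L / 3) ∪ cantorStage k (a + 2 * L / 3) (L / 3)

lemma isOpen_cantorStage (k : ℕ) (a L : ℝ) : IsOpen (cantorStage k a L) := by
  induction k generalizing a L with
  | zero => exact isOpen_Ioo
  | succ k ih => exact (ih _ _).union (ih _ _)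

lemma cantorStage_subset_Ioo (k : ℕ) {a L : ℝ} (hL : 0 < L) :
    cantorStage k a L ⊆ Set.Ioo a (a + L) := by
  induction k generalizing a L with
  | zero => exact subset_rfl
  | succ k ih =>
    refine Set.union_subset ((ih (by positivity)).trans ?_) ((ih (by positivity)).trans ?_) <;>
      exact Set.Ioo_subset_Ioo (by linarith) (by linarith)

lemma cantorStage_nonempty (k : ℕ) {a L : ℝ} (hL : 0 < L) : (cantorStage k a L).Nonempty := by
  induction k generalizing a L with
  | zero => exact Set.nonempty_Ioo.2 (by linarith)
  | succ k ih => exact (ih (by positivity)).inl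

lemma volume_cantorStage_le (k : ℕ) (a L : ℝ) :
    volume (cantorStage k a L) ≤ ENNReal.ofReal ((2 / 3) ^ k * L) := by
  induction k generalizing a L with
  | zero => simp [cantorStage]
  | succ k ih =>
    calc volume (cantorStage (k + 1) a L)
        ≤ volume (cantorStage k a (L / 3)) + volume (cantorStage k (a + 2 * L / 3) (L / 3)) :=
          measure_union_le _ _
      _ ≤ 2 * ENNReal.ofReal ((2 / 3) ^ k * (L / 3)) := by
          rw [two_mul (ENNReal.ofReal _)]; exact add_le_add (ih _ _) (ih _ _)
      _ = ENNReal.ofReal ((2 / 3) ^ (k + 1) * L) := by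
          rw [show (2 / 3 : ℝ) ^ (k + 1) * L = 2 * ((2 / 3) ^ k * (L / 3)) by ring,
            ENNReal.ofReal_mul (by norm_num)]
          norm_num

/-- The larger of the two one-sided densities of `E` at `x` at scale `r`. -/
noncomputable def oneSidedDensity (E : Set ℝ) (x r : ℝ) : ℝ :=
  max ((volume (E ∩ Set.Icc (x - r) x)).toReal / r)
    ((volume (E ∩ Set.Icc x (x + r))).toReal / r)

/-- A set missing a subinterval of half the length fills at most half of an interval. -/
lemma volume_inter_Icc_div_le_half {E : Set ℝ} {c r s : ℝ} (hr : 0 < r) (hcs : c ≤ s)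
    (hs : s + r / 2 ≤ c + r) (hE : Disjoint E (Set.Ioo s (s + r / 2))) :
    (volume (E ∩ Set.Icc c (c + r))).toReal / r ≤ 1 / 2 := by
  have hsub : E ∩ Set.Icc c (c + r) ⊆ Set.Icc c s ∪ Set.Icc (s + r / 2) (c + r) := by
    rintro y ⟨hyE, hy1, hy2⟩
    by_cases h1 : y ≤ s
    · exact Or.inl ⟨hy1, h1⟩
    · by_cases h2 : s + r / 2 ≤ y
      · exact Or.inr ⟨h2, hy2⟩
      · exact (Set.disjoint_left.1 hE hyE ⟨not_le.1 h1, not_le.1 h2⟩).elim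
  have hle : volume (E ∩ Set.Icc c (c + r)) ≤ ENNReal.ofReal (r / 2) := by
    refine (measure_mono hsub).trans ((measure_union_le _ _).trans ?_)
    rw [Real.volume_Icc, Real.volume_Icc, ← ENNReal.ofReal_add (by linarith) (by linarith)]
    exact ENNReal.ofReal_le_ofReal (by linarith)
  rw [div_le_iff₀ hr]
  linarith [ENNReal.toReal_le_of_le_ofReal (by positivity) hle]

/-- If one of the one-sided densities of `E` exceeds `1/2` at all scales below `δ` at the points
of a set `D ⊆ E` whose closure contains `E ∩ V`, then `E` cannot avoid a Cantor stage in a short interval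
inside `V` without avoiding the whole interval. -/
lemma disjoint_Ioo_of_disjoint_cantorStage {E D V : Set ℝ} {δ : ℝ} (hDE : D ⊆ E)
    (hdense : E ∩ V ⊆ closure D)
    (hD : ∀ x ∈ D, ∀ r, 0 < r → r < δ → 1 / 2 < oneSidedDensity E x r)
    (k : ℕ) {a L : ℝ} (hL : 0 < L) (hLδ : L < δ) (hV : Set.Ioo a (a + L) ⊆ V)
    (hdisj : Disjoint E (cantorStage k a L)) : Disjoint E (Set.Ioo a (a + L)) := by
  induction k generalizing a L with
  | zero => exact hdisj
  | succ k ih =>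
    obtain ⟨hl, hr⟩ := Set.disjoint_union_right.1 hdisj
    have hA := ih (a := a) (L := L / 3) (by positivity) (by linarith)
      ((Set.Ioo_subset_Ioo (by linarith) (by linarith)).trans hV) hl
    have hC := ih (a := a + 2 * L / 3) (L := L / 3) (by positivity) (by linarith)
      ((Set.Ioo_subset_Ioo (by linarith) (by linarith)).trans hV) hr
    refine Set.disjoint_left.2 fun x hxE hx => ?_
    -- The density bound is known only on `D`, so `x` is replaced by a point `d ∈ D` of the interval;
    -- as `d ∈ E` avoids the outer thirds, it lies in the closed middle third.
    obtain ⟨d, hd, hdD⟩ := mem_closure_iff.1 (hdense ⟨hxE, hV hx⟩) _ isOpen_Ioo hx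
    have hdA := Set.disjoint_left.1 hA (hDE hdD)
    have hdC := Set.disjoint_left.1 hC (hDE hdD)
    have h1 : a + L / 3 ≤ d := by
      by_contra h; exact hdA ⟨hd.1, by linarith⟩
    have h2 : d ≤ a + 2 * L / 3 := by
      by_contra h; exact hdC ⟨by linarith, by linarith [hd.2]⟩
    have hbig := hD d hdD (2 * L / 3) (by positivity) (by linarith)
    refine hbig.not_ge (max_le ?_ ?_)
    · have := volume_inter_Icc_div_le_half (E := E) (c := d - 2 * L / 3) (r := 2 * L / 3) (s := a)
        (by positivity) (by linarith) (by linarith)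
        (by rwa [show a + 2 * L / 3 / 2 = a + L / 3 by ring])
      rwa [sub_add_cancel] at this
    · exact volume_inter_Icc_div_le_half (s := a + 2 * L / 3)
        (by positivity) (by linarith) (by linarith)
        (by rwa [show a + 2 * L / 3 + 2 * L / 3 / 2 = a + 2 * L / 3 + L / 3 by ring])

/-- A nonempty closed SOSD set `E` has a nonempty portion contained in the closure of a set of points
of `E` where one of the one-sided densities exceeds `1/2` at all scales below a common bound. -/
lemma exists_uniform_scale {E : Set ℝ} (hne : E.Nonempty) (hcl : IsClosed E) (hE : SOSD E) :
    ∃ D ⊆ E, ∃ V : Set ℝ, IsOpen V ∧ (E ∩ V).Nonempty ∧ E ∩ V ⊆ closure D ∧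
      ∃ δ > 0, ∀ x ∈ D, ∀ r, 0 < r → r < δ → 1 / 2 < oneSidedDensity E x r := by
  let K : ℕ → Set ℝ := fun n =>
    {x | x ∈ E ∧ ∀ r, 0 < r → r < 1 / ((n : ℝ) + 1) → 1 / 2 < oneSidedDensity E x r}
  have hcover : ∀ x ∈ E, ∃ n, x ∈ K n := by
    intro x hx
    have h := (hE x hx).eventually (lt_mem_nhds (show (1 / 2 : ℝ) < 1 by norm_num))
    obtain ⟨δ, hδ, h⟩ := (mem_nhdsGT_iff_exists_Ioo_subset).1 h
    obtain ⟨n, hn⟩ := exists_nat_one_div_lt (show (0 : ℝ) < δ from hδ)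
    exact ⟨n, hx, fun r h0 h1 => h ⟨h0, h1.trans hn⟩⟩
  have : CompleteSpace E := hcl.completeSpace_coe
  have : Nonempty E := hne.to_subtype
  obtain ⟨n, y, hy⟩ := nonempty_interior_of_iUnion_of_closed
    (f := fun n => ((↑) : E → ℝ) ⁻¹' closure (K n))
    (fun n => isClosed_closure.preimage continuous_subtype_val)
    (Set.eq_univ_of_forall fun x => Set.mem_iUnion.2
      ((hcover x x.2).imp fun n hn => subset_closure hn))
  obtain ⟨V, hV, hVeq⟩ := isOpen_induced_iff.1
    (isOpen_interior (s := ((↑) : E → ℝ) ⁻¹' closure (K n)))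
  refine ⟨K n, fun x hx => hx.1, V, hV, ⟨y, y.2, ?_⟩, ?_, 1 / ((n : ℝ) + 1), by positivity,
    fun x hx => hx.2⟩
  · rw [← hVeq] at hy; exact hy
  · rintro x ⟨hxE, hxV⟩
    have : (⟨x, hxE⟩ : E) ∈ ((↑) : E → ℝ) ⁻¹' V := hxV
    rw [hVeq] at this
    exact interior_subset (s := ((↑) : E → ℝ) ⁻¹' closure (K n)) this

/-- A set avoiding some Cantor stage in every rational interval has no nonempty closed SOSD
subset. -/
lemma not_exists_SOSD_subset {F : Set ℝ} (k : ℚ × ℚ → ℕ)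
    (hF : ∀ p : ℚ × ℚ, Disjoint F (cantorStage (k p) p.1 (p.2 - p.1))) :
    ¬ ∃ F' : Set ℝ, F' ⊆ F ∧ F'.Nonempty ∧ IsClosed F' ∧ SOSD F' := by
  rintro ⟨E, hEF, hne, hcl, hE⟩
  obtain ⟨D, hDE, V, hV, ⟨x, hxE, hxV⟩, hdense, δ, hδ, hD⟩ := exists_uniform_scale hne hcl hE
  obtain ⟨ρ, hρ, hball⟩ := Metric.isOpen_iff.1 hV x hxV
  have hm : 0 < min ρ (δ / 2) := lt_min hρ (by positivity)
  obtain ⟨p, hp1, hp2⟩ := exists_rat_btwn (show x - min ρ (δ / 2) < x by linarith)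
  obtain ⟨q, hq1, hq2⟩ := exists_rat_btwn (show x < x + min ρ (δ / 2) by linarith)
  have hmρ := min_le_left ρ (δ / 2)
  have hmδ := min_le_right ρ (δ / 2)
  have h := disjoint_Ioo_of_disjoint_cantorStage hDE hdense hD (k (p, q)) (a := p)
    (L := (q : ℝ) - p) (by linarith) (by linarith)
    (fun y hy => hball (by
      rw [Metric.mem_ball, Real.dist_eq, abs_lt]
      constructor <;> linarith [hy.1, hy.2]))
    ((hF (p, q)).mono_left hEF)
  exact Set.disjoint_left.1 h hxE ⟨hp2, by linarith⟩

theorem exists_perfect_nowhereDense_posMeasure_no_SOSD_subset :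
    ∃ F : Set ℝ, F ⊆ Set.Icc 0 1 ∧ IsNowhereDense F ∧ Perfect F ∧ 0 < volume F ∧
      ¬ ∃ F' : Set ℝ, F' ⊆ F ∧ F'.Nonempty ∧ IsClosed F' ∧ SOSD F' := by
  obtain ⟨ε, hε, hsum⟩ := ENNReal.exists_pos_sum_of_countable' one_ne_zero (ℚ × ℚ)
  have hk : ∀ p : ℚ × ℚ, ∃ k, volume (cantorStage k p.1 ((p.2 : ℝ) - p.1)) ≤ ε p := by
    intro p
    have h : Tendsto (fun k : ℕ => ENNReal.ofReal ((2 / 3 : ℝ) ^ k * ((p.2 : ℝ) - p.1)))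
        atTop (nhds 0) := by
      have := ENNReal.tendsto_ofReal ((tendsto_pow_atTop_nhds_zero_of_lt_one
        (show (0 : ℝ) ≤ 2 / 3 by norm_num) (by norm_num)).mul_const ((p.2 : ℝ) - p.1))
      simpa using this
    obtain ⟨k, hk⟩ := (h.eventually (gt_mem_nhds (hε p))).exists
    exact ⟨k, (volume_cantorStage_le _ _ _).trans hk.le⟩
  choose k hk using hk
  set U : Set ℝ := ⋃ p : ℚ × ℚ, cantorStage (k p) p.1 ((p.2 : ℝ) - p.1) with hU
  have hUopen : IsOpen U := isOpen_iUnion fun p => isOpen_cantorStage _ _ _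
  have hUvol : volume U < 1 :=
    ((measure_iUnion_le _).trans (ENNReal.tsum_le_tsum hk)).trans_lt hsum
  have hCcl : IsClosed (Set.Icc (0 : ℝ) 1 \ U) := isClosed_Icc.sdiff hUopen
  obtain ⟨W, F, hW, hFperf, hWF⟩ := exists_countable_union_perfect_of_isClosed hCcl
  have hFsub : F ⊆ Set.Icc (0 : ℝ) 1 \ U := hWF ▸ Set.subset_union_right
  have hFdisj : ∀ p : ℚ × ℚ, Disjoint F (cantorStage (k p) p.1 ((p.2 : ℝ) - p.1)) := fun p =>
    Set.disjoint_left.2 fun x hx hxp => (hFsub hx).2 (Set.mem_iUnion.2 ⟨p, hxp⟩)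
  refine ⟨F, fun x hx => (hFsub hx).1, ?_, hFperf, ?_, not_exists_SOSD_subset k hFdisj⟩
  · rw [hFperf.closed.isNowhereDense_iff, Set.eq_empty_iff_forall_notMem]
    intro x hx
    obtain ⟨ρ, hρ, hball⟩ := Metric.isOpen_iff.1 isOpen_interior x hx
    obtain ⟨p, hp1, hp2⟩ := exists_rat_btwn (show x - ρ < x by linarith)
    obtain ⟨q, hq1, hq2⟩ := exists_rat_btwn (show x < x + ρ by linarith)
    have hL : (0 : ℝ) < (q : ℝ) - p := by linarith
    obtain ⟨y, hy⟩ := cantorStage_nonempty (k (p, q)) (a := p) hL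
    have hy' := cantorStage_subset_Ioo _ hL hy
    refine Set.disjoint_left.1 (hFdisj (p, q)) (interior_subset (hball ?_)) hy
    rw [Metric.mem_ball, Real.dist_eq, abs_lt]
    constructor <;> linarith [hy'.1, hy'.2]
  · rw [pos_iff_ne_zero]
    intro hF0
    have hC0 : volume (Set.Icc (0 : ℝ) 1 \ U) = 0 := by
      rw [hWF]; exact measure_union_null (hW.measure_zero _) hF0
    have h1 : (1 : ENNReal) ≤ volume U := by
      calc (1 : ENNReal) = volume (Set.Icc (0 : ℝ) 1) := by simp
        _ ≤ volume (Set.Icc (0 : ℝ) 1 \ U ∪ U) := measure_mono (by simp)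
        _ ≤ volume (Set.Icc (0 : ℝ) 1 \ U) + volume U := measure_union_le _ _
        _ = volume U := by rw [hC0, zero_add]
    exact hUvol.not_ge h1
end

section
/- There exists an F_σ set F ⊆ ℝ which is strongly one-sided dense but which does not contain any nonempty, closed, strongly one-sided dense subset. -/
/-! The set is the union of the closed sets `closedPart m = ⋂ n ≥ m, (block n)ᶜ`. Here `near i` is
the set of reals `x` for which `4 ^ i * x` lies within `1/4` of an integer (roughly: the base-four digit
at place `i + 1` is `0` or `3`), and `block n` is the open set of points lying in `near i` for all
`n ≤ i < 2 * n`.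

* Inside a unit interval `block n` has measure at most `2 ^ (-n)`, so by Borel-Cantelli the union has
  full measure (`ae_mem_union`). Hence it is strongly one-sided dense at every point.
* Suppose that `K` is closed and strongly one-sided dense, `x ∈ K`, and `x` lies in the middle half of
  a cell `(j / 4 ^ i, (j + 1) / 4 ^ i)`. If `i` is large, `K` meets the first or the last quarter of that
  cell: otherwise both one-sided densities of `K` at `x` at scale `(3/4) / 4 ^ i` are at most `2/3`. So `K`
  meets `near i` inside the cell of `x` (`SOSDAt.exists_near`).
* Let in addition `K` be a nonempty subset of the union. By the Baire category theorem in `K`, some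
  relatively open nonempty part of `K` lies in one `closedPart m` and satisfies the preceding property
  for all `i ≥ m`. Starting there and applying that property for `i = n, n + 1, …, 2 * n - 1` moves a
  point of `K` by at most `2 / 4 ^ n` and brings it into `block n`, because moving within a cell of
  level `i` does not affect membership in `near l` for `l < i` (`near_of_same_cell`). For large `n` this
  contradicts disjointness of `closedPart m` and `block n`.
-/

open MeasureTheory Filter Set

/-- The reals `x` such that `4 ^ i * x` is at distance less than `1/4` from an integer. -/
def near (i : ℕ) : Set ℝ := {x | ∃ l : ℤ, |4 ^ i * x - l| < 1 / 4}

/-- The points lying in `near i` for all `n ≤ i < 2 * n`. -/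
def block (n : ℕ) : Set ℝ := ⋂ i ∈ Finset.range n, near (n + i)

/-- The points that avoid `block n` for all `n ≥ m`. -/
def closedPart (m : ℕ) : Set ℝ := ⋂ n ≥ m, (block n)ᶜ

lemma isOpen_near (i : ℕ) : IsOpen (near i) := by
  have : near i = ⋃ l : ℤ, {x : ℝ | |4 ^ i * x - l| < 1 / 4} := by
    ext x; simp [near]
  rw [this]
  exact isOpen_iUnion fun l => isOpen_lt (by fun_prop) (by fun_prop)

lemma isOpen_block (n : ℕ) : IsOpen (block n) :=
  isOpen_biInter_finset fun _ _ => isOpen_near _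

lemma isClosed_closedPart (m : ℕ) : IsClosed (closedPart m) :=
  isClosed_biInter fun n _ => (isOpen_block n).isClosed_compl

lemma closedPart_mono : Monotone closedPart := by
  intro a b hab x hx
  simp only [closedPart, mem_iInter] at hx ⊢
  exact fun n hn => hx n (le_trans hab hn)

/-- Membership in `near i` is constant on each open cell of a finer level `i + p + 1`. -/
lemma near_of_same_cell {i p : ℕ} {j : ℤ} {y z : ℝ} (hy : y ∈ near i)
    (hyj : 4 ^ (i + p + 1) * y ∈ Ioo (j : ℝ) (j + 1))
    (hzj : 4 ^ (i + p + 1) * z ∈ Ioo (j : ℝ) (j + 1)) : z ∈ near i := by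
  obtain ⟨l, hl⟩ := hy
  refine ⟨l, ?_⟩
  rw [abs_lt] at hl ⊢
  have hp : (0 : ℝ) < 4 ^ p := by positivity
  have e : ∀ w : ℝ, (4 : ℝ) ^ (i + p + 1) * w = 4 * 4 ^ p * (4 ^ i * w) := by
    intro w; rw [pow_succ, pow_add]; ring
  rw [e] at hyj hzj
  obtain ⟨h1, h2⟩ := hyj
  obtain ⟨h3, h4⟩ := hzj
  set Y := (4 : ℝ) ^ i * y
  set Z := (4 : ℝ) ^ i * z
  -- The endpoints of the component of `near i` around `l / 4 ^ i` are integers at level `i + p + 1`.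
  have a1 : (4 * l - 1) * 4 ^ p < j + 1 := by
    have : ((4 * l - 1) * 4 ^ p : ℝ) < j + 1 := by nlinarith
    exact_mod_cast this
  have a2 : j < (4 * l + 1) * 4 ^ p := by
    have : (j : ℝ) < (4 * l + 1) * 4 ^ p := by nlinarith
    exact_mod_cast this
  have b1 : ((4 * l - 1) * 4 ^ p : ℝ) ≤ j := by exact_mod_cast Int.lt_add_one_iff.1 a1
  have b2 : (j + 1 : ℝ) ≤ (4 * l + 1) * 4 ^ p := by exact_mod_cast Int.add_one_le_iff.2 a2
  constructor
  · by_contra! h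
    nlinarith
  · by_contra! h
    nlinarith

/-- The half-open cell `[j / 4 ^ N, (j + 1) / 4 ^ N)`. -/
def cell (N : ℕ) (j : ℤ) : Set ℝ := {x | (j : ℝ) ≤ 4 ^ N * x ∧ 4 ^ N * x < j + 1}

lemma volume_cell (N : ℕ) (j : ℤ) : volume (cell N j) = ENNReal.ofReal (1 / 4 ^ N) := by
  have : cell N j = Ico (j / 4 ^ N : ℝ) ((j + 1) / 4 ^ N) := by
    ext x
    have : (0 : ℝ) < 4 ^ N := by positivity
    simp only [cell, mem_ofPred_eq, mem_Ico, div_le_iff₀ this, lt_div_iff₀ this, mul_comm x]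
  rw [this, Real.volume_Ico]
  congr 1; ring

/-- Each further condition `near i` at least halves the measure inside a cell, as only the first and
the last quarter of a cell can meet it. -/
lemma volume_cell_inter_le (k : ℕ) : ∀ (N : ℕ) (j : ℤ),
    volume (cell N j ∩ ⋂ i ∈ Finset.range k, near (N + i))
      ≤ ENNReal.ofReal ((1 / 2) ^ k * (1 / 4 ^ N)) := by
  induction k with
  | zero => intro N j; simpa using (volume_cell N j).le
  | succ k ih =>
    intro N j
    have sub : cell N j ∩ ⋂ i ∈ Finset.range (k + 1), near (N + i) ⊆
        (cell (N + 1) (4 * j) ∩ ⋂ i ∈ Finset.range k, near (N + 1 + i)) ∪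
        (cell (N + 1) (4 * j + 3) ∩ ⋂ i ∈ Finset.range k, near (N + 1 + i)) := by
      rintro x ⟨⟨hx1, hx2⟩, hx⟩
      simp only [mem_iInter, Finset.mem_range] at hx
      have hxt : x ∈ ⋂ i ∈ Finset.range k, near (N + 1 + i) := by
        simp only [mem_iInter, Finset.mem_range]
        intro i hi
        have := hx (i + 1) (by omega)
        rwa [show N + (i + 1) = N + 1 + i by ring] at this
      obtain ⟨l, hl⟩ := hx 0 (by omega)
      rw [add_zero, abs_lt] at hl
      have l1 : j ≤ l := by
        have : (j : ℝ) < l + 1 := by linarith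
        exact Int.lt_add_one_iff.1 (by exact_mod_cast this)
      have l2 : l ≤ j + 1 := by
        have : (l : ℝ) < j + 1 + 1 := by linarith
        exact Int.lt_add_one_iff.1 (by exact_mod_cast this)
      have e : (4 : ℝ) ^ (N + 1) * x = 4 * (4 ^ N * x) := by ring
      rcases (by omega : l = j ∨ l = j + 1) with rfl | rfl
      · left
        refine ⟨?_, hxt⟩
        simp only [cell, mem_ofPred_eq, e]
        push_cast
        constructor <;> linarith
      · right
        refine ⟨?_, hxt⟩
        push_cast at hl
        simp only [cell, mem_ofPred_eq, e]
        push_cast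
        constructor <;> linarith
    refine (measure_mono sub).trans ((measure_union_le _ _).trans
      ((add_le_add (ih _ _) (ih _ _)).trans ?_))
    rw [← ENNReal.ofReal_add (by positivity) (by positivity)]
    apply ENNReal.ofReal_le_ofReal
    apply le_of_eq
    field_simp
    ring

lemma volume_block_inter_le (n : ℕ) (a : ℤ) :
    volume (block n ∩ Ico (a : ℝ) (a + 1)) ≤ ENNReal.ofReal ((1 / 2) ^ n) := by
  have sub : block n ∩ Ico (a : ℝ) (a + 1) ⊆
      ⋃ s ∈ Finset.range (4 ^ n),
        (cell n (a * 4 ^ n + s) ∩ ⋂ i ∈ Finset.range n, near (n + i)) := by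
    rintro x ⟨hx, hx1, hx2⟩
    have hp : (0 : ℝ) < 4 ^ n := by positivity
    have h0 : 0 ≤ 4 ^ n * (x - a) := mul_nonneg hp.le (by linarith)
    refine mem_iUnion₂.2 ⟨⌊4 ^ n * (x - a)⌋₊, Finset.mem_range.2 ?_, ?_, hx⟩
    · rw [Nat.floor_lt h0]
      push_cast
      nlinarith
    · have h1 := Nat.floor_le h0
      have h2 := Nat.lt_floor_add_one (4 ^ n * (x - a))
      simp only [cell, mem_ofPred_eq]
      push_cast
      constructor <;> linarith
  refine (measure_mono sub).trans ((measure_biUnion_finset_le _ _).trans ?_)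
  refine (Finset.sum_le_sum fun s _ => volume_cell_inter_le n n _).trans ?_
  rw [Finset.sum_const, Finset.card_range, nsmul_eq_mul, ← ENNReal.ofReal_natCast,
    ← ENNReal.ofReal_mul (by positivity)]
  apply ENNReal.ofReal_le_ofReal
  push_cast
  apply le_of_eq
  field_simp

lemma ae_mem_union : ∀ᵐ x : ℝ, x ∈ ⋃ m, closedPart m := by
  have key : ∀ a : ℤ, ∀ᵐ x : ℝ, ∀ᶠ n in atTop, x ∉ block n ∩ Ico (a : ℝ) (a + 1) := by
    intro a
    apply ae_eventually_notMem
    refine ne_top_of_le_ne_top ?_ (ENNReal.tsum_le_tsum fun n => volume_block_inter_le n a)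
    rw [← ENNReal.ofReal_tsum_of_nonneg (fun n => by positivity) summable_geometric_two]
    exact ENNReal.ofReal_ne_top
  filter_upwards [ae_all_iff.2 key] with x hx
  obtain ⟨m, hm⟩ := eventually_atTop.1 (hx ⌊x⌋)
  simp only [closedPart, mem_iUnion, mem_iInter]
  exact ⟨m, fun n hn hb => hm n hn ⟨hb, Int.floor_le x, Int.lt_floor_add_one x⟩⟩

lemma SOSD_of_ae {F : Set ℝ} (hF : ∀ᵐ x : ℝ, x ∈ F) : SOSD F := by
  intro x _
  have hv : ∀ s : Set ℝ, volume (F ∩ s) = volume s := by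
    intro s
    apply measure_congr
    filter_upwards [hF] with y hy
    exact propext ⟨fun h => h.2, fun h => ⟨hy, h⟩⟩
  refine Tendsto.congr' ?_ tendsto_const_nhds
  filter_upwards [self_mem_nhdsWithin] with r hr
  have hr : 0 < r := hr
  simp [hv, hr.le, hr.ne']

lemma volume_inter_Icc_le {K : Set ℝ} {a b c d : ℝ} (hca : c ≤ a) (hbd : b ≤ d)
    (hK : K ∩ Ioo a b = ∅) : (volume (K ∩ Icc c d)).toReal ≤ (d - c) - (b - a) := by
  have sub : K ∩ Icc c d ⊆ Icc c a ∪ Icc b d := by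
    rintro x ⟨hx, h1, h2⟩
    by_contra h
    simp only [mem_union, mem_Icc, not_or, not_and, not_le] at h
    have : x ∈ K ∩ Ioo a b := ⟨hx, h.1 h1, by by_contra! h'; exact absurd (h.2 h') (by linarith)⟩
    rw [hK] at this
    exact this
  have : volume (K ∩ Icc c d) ≤ ENNReal.ofReal ((a - c) + (d - b)) := by
    refine (measure_mono sub).trans ((measure_union_le _ _).trans ?_)
    rw [Real.volume_Icc, Real.volume_Icc, ENNReal.ofReal_add (by linarith) (by linarith)]
  exact (ENNReal.toReal_le_of_le_ofReal (by linarith) this).trans (by linarith)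

/-- The points from which `K` reaches `near i` without leaving their open cell of level `i`, for all
`i ≥ m`. For fixed `K` this is a closed condition on `x`, since only the premise depends on `x`. -/
def Reaches (K : Set ℝ) (m : ℕ) (x : ℝ) : Prop :=
  ∀ i ≥ m, ∀ j : ℤ, 4 ^ i * x ∈ Ioo (j : ℝ) (j + 1) →
    ∃ z ∈ K, 4 ^ i * z ∈ Ioo (j : ℝ) (j + 1) ∧ z ∈ near i

lemma isClosed_reaches (K : Set ℝ) (m : ℕ) : IsClosed {x | Reaches K m x} := by
  simp only [Reaches, ofPred_forall]
  refine isClosed_iInter fun i => isClosed_iInter fun _ => isClosed_iInter fun j => ?_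
  exact isClosed_imp (isOpen_Ioo.preimage (by fun_prop)) isClosed_const

lemma Reaches.mono {K : Set ℝ} {m n : ℕ} {x : ℝ} (hmn : m ≤ n) (h : Reaches K m x) :
    Reaches K n x := fun i hi => h i (hmn.trans hi)

lemma SOSDAt.exists_near {K : Set ℝ} {x : ℝ} (h : SOSDAt K x) (hx : x ∈ K) :
    ∃ m, Reaches K m x := by
  have ev := h.eventually (lt_mem_nhds (show (2 / 3 : ℝ) < 1 by norm_num))
  obtain ⟨δ, hδ, hδ'⟩ := mem_nhdsGT_iff_exists_Ioo_subset.1 ev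
  have hδ : 0 < δ := hδ
  obtain ⟨m, hm⟩ := exists_pow_lt_of_lt_one hδ (show (1 / 4 : ℝ) < 1 by norm_num)
  refine ⟨m, fun i hi j hxj => ?_⟩
  by_cases hn : x ∈ near i
  · exact ⟨x, hx, hxj, hn⟩
  by_contra! hno
  have hp : (0 : ℝ) < 4 ^ i := by positivity
  have hle : (1 / 4 : ℝ) ^ i ≤ (1 / 4) ^ m :=
    pow_le_pow_of_le_one (by norm_num) (by norm_num) hi
  have hmid1 : (j : ℝ) + 1 / 4 ≤ 4 ^ i * x := by
    by_contra! h'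
    exact hn ⟨j, by rw [abs_lt]; constructor <;> linarith [hxj.1]⟩
  have hmid2 : 4 ^ i * x ≤ (j : ℝ) + 3 / 4 := by
    by_contra! h'
    exact hn ⟨j + 1, by push_cast; rw [abs_lt]; constructor <;> linarith [hxj.2]⟩
  -- This radius reaches from `x` to both ends of the cell, or beyond.
  set r : ℝ := 3 / 4 / 4 ^ i with hr
  have hr0 : 0 < r := by positivity
  have hrδ : r < δ := by
    have : r = 3 / 4 * (1 / 4) ^ i := by rw [hr, one_div_pow]; ring
    have h0 : (0 : ℝ) < (1 / 4) ^ i := by positivity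
    linarith
  have hbig := hδ' ⟨hr0, hrδ⟩
  have hrp : r * 4 ^ i = 3 / 4 := by rw [hr]; field_simp
  have e1 : K ∩ Ioo ((j : ℝ) / 4 ^ i) ((j + 1 / 4) / 4 ^ i) = ∅ := by
    rw [eq_empty_iff_forall_notMem]
    rintro z ⟨hz, h1, h2⟩
    rw [div_lt_iff₀ hp] at h1
    rw [lt_div_iff₀ hp] at h2
    refine hno z hz ⟨by linarith, by linarith⟩ ⟨j, ?_⟩
    rw [abs_lt]; constructor <;> linarith
  have e2 : K ∩ Ioo (((j : ℝ) + 3 / 4) / 4 ^ i) ((j + 1) / 4 ^ i) = ∅ := by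
    rw [eq_empty_iff_forall_notMem]
    rintro z ⟨hz, h1, h2⟩
    rw [div_lt_iff₀ hp] at h1
    rw [lt_div_iff₀ hp] at h2
    refine hno z hz ⟨by linarith, by linarith⟩ ⟨j + 1, ?_⟩
    push_cast
    rw [abs_lt]; constructor <;> linarith
  have v1 := volume_inter_Icc_le (K := K) (c := x - r) (d := x)
    (by rw [le_div_iff₀ hp]; linarith)
    (by rw [div_le_iff₀ hp]; linarith) e1
  have v2 := volume_inter_Icc_le (K := K) (c := x) (d := x + r)
    (by rw [le_div_iff₀ hp]; linarith)
    (by rw [div_le_iff₀ hp]; linarith) e2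
  have w1 : ((j : ℝ) + 1 / 4) / 4 ^ i - j / 4 ^ i = r / 3 := by rw [hr]; ring
  have w2 : ((j : ℝ) + 1) / 4 ^ i - (j + 3 / 4) / 4 ^ i = r / 3 := by rw [hr]; ring
  rw [w1] at v1
  rw [w2] at v2
  have hbig : (2 / 3 : ℝ) < max _ _ := hbig
  rw [lt_max_iff, lt_div_iff₀ hr0, lt_div_iff₀ hr0] at hbig
  rcases hbig with h | h <;> linarith

/-- Applying `Reaches` at the levels `n, …, n + k - 1` in turn, starting from `x`. The displacements
are dominated by the geometric series with terms `1 / 4 ^ n * (1 / 2) ^ k`. -/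
lemma exists_near_of_reaches {K : Set ℝ} {m n : ℕ} {x ε : ℝ} (hx : x ∈ K)
    (hK : ∀ y ∈ K, |y - x| < ε → Reaches K m y) (hmn : m ≤ n) (hε : 2 / 4 ^ n < ε) (k : ℕ) :
    ∃ y ∈ K, |y - x| ≤ 2 / 4 ^ n * (1 - (1 / 2) ^ k) ∧ ∀ i < k, y ∈ near (n + i) := by
  induction k with
  | zero => exact ⟨x, hx, by simp, by simp⟩
  | succ k ih =>
    obtain ⟨y, hy, hyx, hyn⟩ := ih
    have hp : (0 : ℝ) < 2 / 4 ^ n := by positivity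
    have hk : (0 : ℝ) < (1 / 2) ^ k := by positivity
    have hk' : ((1 : ℝ) / 2) ^ (k + 1) = (1 / 2) ^ k / 2 := by ring
    by_cases hyk : y ∈ near (n + k)
    · refine ⟨y, hy, hyx.trans (by rw [hk']; gcongr; linarith), fun i hi => ?_⟩
      rcases Nat.lt_succ_iff_lt_or_eq.1 hi with h | rfl
      exacts [hyn i h, hyk]
    have hcell : 4 ^ (n + k) * y ∈
        Ioo (⌊4 ^ (n + k) * y⌋ : ℝ) (⌊4 ^ (n + k) * y⌋ + 1) := by
      refine ⟨lt_of_le_of_ne (Int.floor_le _) fun h => hyk ⟨⌊4 ^ (n + k) * y⌋, ?_⟩, Int.lt_floor_add_one _⟩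
      rw [h, sub_self, abs_zero]
      norm_num
    obtain ⟨z, hz, hzc, hzn⟩ := hK y hy (by nlinarith) (n + k) (by omega) _ hcell
    refine ⟨z, hz, ?_, fun i hi => ?_⟩
    · have hq : (0 : ℝ) < 4 ^ (n + k) := by positivity
      have hzy : |z - y| ≤ 1 / 4 ^ (n + k) := by
        rw [le_div_iff₀ hq, ← abs_of_pos hq, ← abs_mul, abs_le]
        constructor <;> linarith [hcell.1, hcell.2, hzc.1, hzc.2]
      have h4 : (1 : ℝ) / 4 ^ (n + k) ≤ 1 / 4 ^ n * (1 / 2) ^ k := by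
        rw [pow_add, one_div_pow, ← one_div_mul_one_div]
        gcongr
        norm_num
      calc |z - x| ≤ |z - y| + |y - x| := abs_sub_le _ _ _
        _ ≤ 1 / 4 ^ n * (1 / 2) ^ k + 2 / 4 ^ n * (1 - (1 / 2) ^ k) := by linarith
        _ = _ := by rw [hk']; ring
    · rcases Nat.lt_succ_iff_lt_or_eq.1 hi with h | rfl
      · obtain ⟨p, rfl⟩ : ∃ p, k = i + p + 1 := ⟨k - i - 1, by omega⟩
        rw [show n + (i + p + 1) = n + i + p + 1 by ring] at hcell hzc
        exact near_of_same_cell (hyn i h) hcell hzc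
      · exact hzn

theorem exists_SOSD_Fsigma_no_closed_SOSD_subset :
    ∃ F : Set ℝ, (∃ C : ℕ → Set ℝ, (∀ n, IsClosed (C n)) ∧ F = ⋃ n, C n) ∧
      SOSD F ∧
      ¬ ∃ F' : Set ℝ, F' ⊆ F ∧ F'.Nonempty ∧ IsClosed F' ∧ SOSD F' := by
  refine ⟨⋃ m, closedPart m, ⟨closedPart, isClosed_closedPart, rfl⟩, SOSD_of_ae ae_mem_union, ?_⟩
  rintro ⟨K, hKF, hne, hKc, hKS⟩
  have : CompleteSpace K := hKc.completeSpace_coe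
  have : Nonempty K := hne.to_subtype
  obtain ⟨m, ⟨x, hxK⟩, hx⟩ := nonempty_interior_of_iUnion_of_closed
    (f := fun m => {x : K | x.1 ∈ closedPart m ∧ Reaches K m x.1})
    (fun m => ((isClosed_closedPart m).inter (isClosed_reaches K m)).preimage
      continuous_subtype_val)
    (by
      rw [eq_univ_iff_forall]
      rintro ⟨y, hy⟩
      obtain ⟨a, ha⟩ := mem_iUnion.1 (hKF hy)
      obtain ⟨b, hb⟩ := (hKS y hy).exists_near hy
      exact mem_iUnion.2 ⟨max a b, closedPart_mono (le_max_left a b) ha,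
        hb.mono (le_max_right a b)⟩)
  obtain ⟨ε, hε, hball⟩ := Metric.mem_nhds_iff.1 (mem_interior_iff_mem_nhds.1 hx)
  have hloc : ∀ y ∈ K, |y - x| < ε → y ∈ closedPart m ∧ Reaches K m y :=
    fun y hy hyx => hball (show (⟨y, hy⟩ : K) ∈ Metric.ball _ ε from hyx)
  obtain ⟨n₀, hn₀⟩ := exists_pow_lt_of_lt_one (half_pos hε) (show (1 / 4 : ℝ) < 1 by norm_num)
  have hn : 2 / 4 ^ max m n₀ < ε := by
    have : (1 / 4 : ℝ) ^ max m n₀ ≤ (1 / 4) ^ n₀ :=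
      pow_le_pow_of_le_one (by norm_num) (by norm_num) (le_max_right _ _)
    rw [one_div_pow] at this
    rw [div_eq_mul_one_div]
    linarith
  set n := max m n₀ with hn_def
  have hmn : m ≤ n := le_max_left _ _
  obtain ⟨y, hy, hyx, hyn⟩ :=
    exists_near_of_reaches hxK (fun y hy h => (hloc y hy h).2) hmn hn n
  have hp : (0 : ℝ) < 2 / 4 ^ n := by positivity
  have hk : (0 : ℝ) < (1 / 2) ^ n := by positivity
  have hyC := (hloc y hy (by nlinarith)).1
  simp only [closedPart, mem_iInter] at hyC
  refine hyC n hmn ?_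
  simp only [block, mem_iInter, Finset.mem_range]
  exact hyn
end

section
/- There exists an F_σ set F ⊆ ℝ which is strongly one-sided dense but which cannot be written as a countable union of closed, strongly one-sided dense sets. -/
/-!
The set `F` is built so that it contains no nonempty closed strongly one-sided dense (SOSD) set.

Let `cant k a L` be the `k`-th stage of the middle-thirds Cantor construction on `[a, a + L]`, a
union of `2 ^ k` closed intervals of total length `(2 / 3) ^ k * L`. Two facts make it useful.

* It is as small in measure as desired, for `k` large.
* If a set `K` misses `cant k a L` and at every point of `K ∩ [a, a + L]` and every scale up to `L`
  one side has `K`-density above `1 / 2`, then `K` misses all of `[a, a + L]`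
  (`disjoint_Icc_of_disjoint_cant`). Indeed, by induction `K` misses both outer thirds, and then
  at a point of the middle third the scale `2 * L / 3` sees an outer third on each side, so both
  one-sided densities are at most `1 / 2`.

Choose intervals `[a i, a i + L i]` that include arbitrarily short ones around each point, and put
`W i = cant (k i) (a i) (L i)` with `∑ 2 ^ i * volume (W i) < ∞`. A nonempty closed SOSD set `K`
satisfies, by Baire's theorem, the density hypothesis with a uniform scale on a nonempty relatively
open part; a short interval around a point of that part shows that `K` meets some `W i`
(`eq_empty_of_SOSD`).

It remains to find a nonempty SOSD set `F` of type `F_σ` that misses every `W i`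
(`exists_Fsigma_SOSD`). Give `W i` the weight `2 ^ i`, and let `ρ` be the resulting finite measure.
Let `F` be the set of points outside all `W i` at which the maximal function
`x ↦ sup_r ρ (closedBall x r) / r` is finite. By differentiation of measures `F` has full measure
in the complement of `⋃ i, W i`. Near a point of `F` only the `W i` with large `i` occur, and the
bound on `ρ` makes them negligible, so `F` even has density one at each of its points. Finally `F`
is `F_σ`, since the sublevel sets of the maximal function are closed and each of them meets only
finitely many `W i`.
-/

open MeasureTheory Filter Set

open scoped ENNReal
open Metric

/-! ### Finite stages of the Cantor set -/

/-- The `k`-th stage of the middle-thirds Cantor construction on `[a, a + L]`: each step keeps the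
two closed outer thirds. Only used for `0 < L`. -/
def cant : ℕ → ℝ → ℝ → Set ℝ
  | 0, a, L => Icc a (a + L)
  | k + 1, a, L => cant k a (L / 3) ∪ cant k (a + 2 * L / 3) (L / 3)

lemma isClosed_cant (k : ℕ) : ∀ a L : ℝ, IsClosed (cant k a L) := by
  induction k with
  | zero => exact fun a L => isClosed_Icc
  | succ k ih => exact fun a L => (ih _ _).union (ih _ _)

lemma volume_cant_le (k : ℕ) : ∀ a L : ℝ, 0 < L →
    volume (cant k a L) ≤ ENNReal.ofReal ((2 / 3) ^ k * L) := by
  induction k with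
  | zero => intro a L hL; simp [cant]
  | succ k ih =>
    intro a L hL
    refine (measure_union_le _ _).trans
      ((add_le_add (ih _ _ (by positivity)) (ih _ _ (by positivity))).trans_eq ?_)
    rw [← ENNReal.ofReal_add (by positivity) (by positivity)]
    congr 1
    ring

/-- Every point of `cant k a L` lies in one of its nondegenerate constituent intervals, whose length
serves as `r`. -/
lemma cant_fat (k : ℕ) : ∀ a L : ℝ, 0 < L → ∀ x ∈ cant k a L,
    ∃ r > 0, ENNReal.ofReal r ≤ volume (cant k a L ∩ Metric.closedBall x r) := by
  induction k with
  | zero =>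
    intro a L hL x hx
    refine ⟨L, hL, ?_⟩
    have hx' : x ∈ Icc a (a + L) := hx
    have : cant 0 a L ∩ Metric.closedBall x L = Icc a (a + L) := by
      rw [Real.closedBall_eq_Icc]
      refine inter_eq_left.2 (Icc_subset_Icc ?_ ?_) <;> linarith [hx'.1, hx'.2]
    rw [this, Real.volume_Icc, add_sub_cancel_left]
  | succ k ih =>
    rintro a L hL x (hx | hx)
    · obtain ⟨r, hr, h⟩ := ih _ _ (by positivity) x hx
      exact ⟨r, hr, h.trans (measure_mono (inter_subset_inter_left _ subset_union_left))⟩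
    · obtain ⟨r, hr, h⟩ := ih _ _ (by positivity) x hx
      exact ⟨r, hr, h.trans (measure_mono (inter_subset_inter_left _ subset_union_right))⟩

/-- A gap `[c, d]` of `K` inside `[u, v]` costs its full length. When `d < c`
the hypothesis is void and the bound is trivial. -/
lemma measureReal_inter_le_of_gap {K : Set ℝ} {u v c d : ℝ} (hu : u ≤ c) (hv : d ≤ v)
    (h : Disjoint K (Icc c d)) : volume.real (K ∩ Icc u v) ≤ (v - u) - (d - c) := by
  have hsub : K ∩ Icc u v ⊆ Icc u c ∪ Icc d v := by
    rintro y ⟨hyK, hy⟩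
    rcases le_or_gt y c with h1 | h1
    · exact Or.inl ⟨hy.1, h1⟩
    rcases le_or_gt d y with h2 | h2
    · exact Or.inr ⟨h2, hy.2⟩
    exact absurd ⟨h1.le, h2.le⟩ (Set.disjoint_left.1 h hyK)
  have hfin : volume (Icc u c ∪ Icc d v) ≠ ⊤ :=
    (measure_union_lt_top measure_Icc_lt_top measure_Icc_lt_top).ne
  calc volume.real (K ∩ Icc u v) ≤ volume.real (Icc u c ∪ Icc d v) := measureReal_mono hsub hfin
    _ ≤ volume.real (Icc u c) + volume.real (Icc d v) := measureReal_union_le _ _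
    _ = _ := by
      rw [Real.volume_real_Icc_of_le hu, Real.volume_real_Icc_of_le hv]; ring

/-- A set that misses a Cantor stage, and whose points all have a side of density above `1 / 2` at
every scale up to the length of the underlying interval, misses that whole interval. -/
lemma disjoint_Icc_of_disjoint_cant {K : Set ℝ} (k : ℕ) : ∀ a L : ℝ, 0 < L →
    Disjoint K (cant k a L) →
    (∀ x ∈ K ∩ Icc a (a + L), ∀ r, 0 < r → r ≤ L →
      r / 2 < max (volume.real (K ∩ Icc (x - r) x)) (volume.real (K ∩ Icc x (x + r)))) →
    Disjoint K (Icc a (a + L)) := by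
  induction k with
  | zero => exact fun a L _ h _ => h
  | succ k ih =>
    intro a L hL hd hK
    obtain ⟨hd1, hd2⟩ := Set.disjoint_union_right.1 hd
    have h1 : Disjoint K (Icc a (a + L / 3)) := by
      refine ih _ _ (by positivity) hd1 fun x hx r hr hrL => hK x ⟨hx.1, hx.2.1, ?_⟩ r hr ?_
      · linarith [hx.2.2]
      · linarith
    have h2 : Disjoint K (Icc (a + 2 * L / 3) (a + L)) := by
      have := ih (a + 2 * L / 3) (L / 3) (by positivity) hd2
        fun x hx r hr hrL => hK x ⟨hx.1, ?_, ?_⟩ r hr ?_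
      · convert this using 2; ring
      · linarith [hx.2.1]
      · linarith [hx.2.2]
      · linarith
    refine Set.disjoint_left.2 fun x hxK hx => ?_
    have hx1 : a + L / 3 < x := by
      by_contra! h
      exact Set.disjoint_left.1 h1 hxK ⟨hx.1, h⟩
    have hx2 : x < a + 2 * L / 3 := by
      by_contra! h
      exact Set.disjoint_left.1 h2 hxK ⟨h, hx.2⟩
    -- At radius `2L/3` each side of `x` contains a whole outer third, that is, half of its length.
    have hm := hK x ⟨hxK, hx⟩ (2 * L / 3) (by positivity) (by linarith)
    have b1 := measureReal_inter_le_of_gap (u := x - 2 * L / 3) (v := x) (by linarith)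
      (by linarith) h1
    have b2 := measureReal_inter_le_of_gap (u := x) (v := x + 2 * L / 3) (by linarith)
      (by linarith) h2
    rcases lt_max_iff.1 hm with h | h <;> linarith

lemma exists_dense_intervals : ∃ a L : ℕ → ℝ, (∀ i, 0 < L i) ∧
    ∀ x : ℝ, ∀ ε > 0, ∃ i, a i ≤ x ∧ x ≤ a i + L i ∧ L i < ε := by
  refine ⟨fun i => (TopologicalSpace.denseSeq (ℝ × ℝ) i).1,
    fun i => Real.exp (TopologicalSpace.denseSeq (ℝ × ℝ) i).2, fun i => Real.exp_pos _, ?_⟩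
  intro x ε hε
  have hopen : IsOpen {p : ℝ × ℝ | p.1 < x ∧ x < p.1 + Real.exp p.2 ∧ Real.exp p.2 < ε} := by
    have h1 : IsOpen {p : ℝ × ℝ | p.1 < x} := isOpen_lt (by fun_prop) (by fun_prop)
    have h2 : IsOpen {p : ℝ × ℝ | x < p.1 + Real.exp p.2} := isOpen_lt (by fun_prop) (by fun_prop)
    have h3 : IsOpen {p : ℝ × ℝ | Real.exp p.2 < ε} := isOpen_lt (by fun_prop) (by fun_prop)
    exact h1.inter (h2.inter h3)
  obtain ⟨i, h1, h2, h3⟩ := (TopologicalSpace.denseRange_denseSeq (ℝ × ℝ)).exists_mem_open hopen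
    ⟨(x - ε / 4, Real.log (ε / 2)), by
      simp only [mem_ofPred_eq, Real.exp_log (half_pos hε)]
      refine ⟨?_, ?_, ?_⟩ <;> linarith⟩
  exact ⟨i, h1.le, h2.le, h3⟩

lemma exists_cant_volume_le (a L : ℝ) (hL : 0 < L) {ε : ℝ≥0∞} (hε : ε ≠ 0) :
    ∃ k, volume (cant k a L) ≤ ε := by
  have h : Tendsto (fun k : ℕ => ENNReal.ofReal ((2 / 3) ^ k * L)) atTop (nhds 0) := by
    have := (tendsto_pow_atTop_nhds_zero_of_lt_one (r := (2 / 3 : ℝ))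
      (by norm_num) (by norm_num)).mul_const L
    simpa using ENNReal.tendsto_ofReal this
  obtain ⟨k, hk⟩ := (h.eventually (ge_mem_nhds (pos_iff_ne_zero.2 hε))).exists
  exact ⟨k, (volume_cant_le k a L hL).trans hk⟩

/-! ### Closed SOSD sets meet some Cantor stage -/

lemma continuous_measureReal_right (K : Set ℝ) (r : ℝ) :
    Continuous fun x => volume.real (K ∩ Icc x (x + r)) := by
  refine (LipschitzWith.of_le_add fun x y => ?_).continuous
  have hsub : K ∩ Icc x (x + r) ⊆ (K ∩ Icc y (y + r)) ∪ (Icc x y ∪ Icc (y + r) (x + r)) := by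
    rintro z ⟨hzK, hz1, hz2⟩
    rcases le_total z y with h | h
    · exact Or.inr (Or.inl ⟨hz1, h⟩)
    rcases le_total z (y + r) with h' | h'
    · exact Or.inl ⟨hzK, h, h'⟩
    · exact Or.inr (Or.inr ⟨h', hz2⟩)
  have hfin : volume ((K ∩ Icc y (y + r)) ∪ (Icc x y ∪ Icc (y + r) (x + r))) ≠ ⊤ :=
    (measure_union_lt_top ((measure_mono inter_subset_right).trans_lt measure_Icc_lt_top)
      (measure_union_lt_top measure_Icc_lt_top measure_Icc_lt_top)).ne
  refine (measureReal_mono hsub hfin).trans ((measureReal_union_le _ _).trans ?_)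
  refine add_le_add le_rfl ((measureReal_union_le _ _).trans_eq ?_)
  rw [Real.volume_real_Icc, Real.volume_real_Icc, Real.dist_eq]
  rcases le_total x y with h | h
  · rw [abs_of_nonpos (by linarith), max_eq_left (by linarith), max_eq_right (by linarith)]; ring
  · rw [abs_of_nonneg (by linarith), max_eq_right (by linarith), max_eq_left (by linarith)]; ring

lemma continuous_measureReal_left (K : Set ℝ) (r : ℝ) :
    Continuous fun x => volume.real (K ∩ Icc (x - r) x) := by
  have h : Continuous fun x : ℝ => x - r := by fun_prop
  simpa [Function.comp_def] using (continuous_measureReal_right K r).comp h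

/-- A closed SOSD set that misses one Cantor stage on each of a sequence of intervals including
arbitrarily short ones around every point is empty. -/
lemma eq_empty_of_SOSD {K : Set ℝ} (hK : IsClosed K) (hS : SOSD K) {a L : ℕ → ℝ} {k : ℕ → ℕ}
    (hL : ∀ i, 0 < L i) (hdense : ∀ x : ℝ, ∀ ε > 0, ∃ i, a i ≤ x ∧ x ≤ a i + L i ∧ L i < ε)
    (hd : ∀ i, Disjoint K (cant (k i) (a i) (L i))) : K = ∅ := by
  by_contra hne
  have hne' : Nonempty K := (nonempty_iff_ne_empty.2 hne).to_subtype
  have : CompleteSpace K := hK.completeSpace_coe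
  -- `T m`: the points where, uniformly at all scales below `1 / (m + 1)`, one side is `3 / 4`-dense.
  let T : ℕ → Set K := fun m => {x | ∀ r : ℝ, 0 < r → r < 1 / ((m : ℝ) + 1) →
    3 / 4 * r ≤ max (volume.real (K ∩ Icc ((x : ℝ) - r) x)) (volume.real (K ∩ Icc (x : ℝ) (x + r)))}
  have hTc : ∀ m, IsClosed (T m) := by
    intro m
    simp only [T, ofPred_forall]
    refine isClosed_iInter fun r => isClosed_iInter fun _ => isClosed_iInter fun _ => ?_
    exact isClosed_le continuous_const (((continuous_measureReal_left K r).comp continuous_subtype_val).max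
      ((continuous_measureReal_right K r).comp continuous_subtype_val))
  have hTu : ⋃ m, T m = univ := by
    refine eq_univ_of_forall fun x => mem_iUnion.2 ?_
    have h := (hS x x.2).eventually (lt_mem_nhds (show (3 / 4 : ℝ) < 1 by norm_num))
    obtain ⟨δ, hδ, h⟩ := (mem_nhdsGT_iff_exists_Ioo_subset.1 h)
    obtain ⟨m, hm⟩ := exists_nat_one_div_lt (show (0 : ℝ) < δ from hδ)
    refine ⟨m, fun r hr hrm => ?_⟩
    have h2 := h ⟨hr, hrm.trans hm⟩
    rw [mem_ofPred_eq] at h2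
    rw [max_div_div_right hr.le, lt_div_iff₀ hr] at h2
    exact h2.le
  obtain ⟨m, x, hx⟩ := nonempty_interior_of_iUnion_of_closed hTc hTu
  obtain ⟨δ, hδ, hball⟩ := Metric.mem_nhds_iff.1 (mem_interior_iff_mem_nhds.1 hx)
  obtain ⟨i, hi1, hi2, hi3⟩ := hdense x (min δ (1 / ((m : ℝ) + 1))) (lt_min hδ (by positivity))
  have := disjoint_Icc_of_disjoint_cant (k i) (a i) (L i) (hL i) (hd i) fun y hy r hr hrL => by
    have hyT : (⟨y, hy.1⟩ : K) ∈ T m := by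
      refine hball ?_
      rw [Metric.mem_ball, Subtype.dist_eq, Real.dist_eq, abs_lt]
      have := hi3.trans_le (min_le_left _ _)
      constructor <;> simp only <;> linarith [hy.2.1, hy.2.2]
    have := hyT r hr (hrL.trans_lt (hi3.trans_le (min_le_right _ _)))
    simp only at this
    linarith
  exact Set.disjoint_left.1 this x.2 ⟨hi1, hi2⟩

/-! ### An `F_σ` set of density points avoiding prescribed closed sets -/

/-- Sublevel sets of the centred maximal function of a measure are closed. -/
lemma isClosed_maximal_le (ρ : Measure ℝ) (m : ℝ) :
    IsClosed {x : ℝ | ∀ r > 0, ρ (closedBall x r) ≤ ENNReal.ofReal (m * r)} := by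
  refine isClosed_of_closure_subset fun x hx r hr => ?_
  have hlim : Tendsto (fun δ : ℝ => ENNReal.ofReal (m * (r + δ))) (nhdsWithin 0 (Ioi 0))
      (nhds (ENNReal.ofReal (m * (r + 0)))) :=
    tendsto_nhdsWithin_of_tendsto_nhds
      (ENNReal.continuous_ofReal.comp (by fun_prop : Continuous fun δ : ℝ => m * (r + δ))).continuousAt
  rw [add_zero] at hlim
  refine ge_of_tendsto hlim (eventually_mem_nhdsWithin.mono fun δ hδ => ?_)
  obtain ⟨y, hy, hxy⟩ := Metric.mem_closure_iff.1 hx δ hδ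
  have hδ' : 0 < δ := hδ
  refine (measure_mono (closedBall_subset_closedBall' ?_)).trans (hy (r + δ) (by linarith))
  linarith

/-- The maximal function of a finite measure is finite almost everywhere: small radii are controlled
by differentiation of measures, large ones by the total mass. -/
lemma ae_exists_maximal_le (ρ : Measure ℝ) [IsFiniteMeasure ρ] :
    ∀ᵐ x ∂volume, ∃ m : ℕ, ∀ r > 0, ρ (closedBall x r) ≤ ENNReal.ofReal (m * r) := by
  filter_upwards [Besicovitch.ae_tendsto_rnDeriv ρ volume, Measure.rnDeriv_lt_top ρ volume]
    with x hx hlt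
  obtain ⟨c, hc1, hc2⟩ := exists_between hlt
  have hc : c ≠ ⊤ := hc2.ne
  obtain ⟨δ, hδ, h⟩ := mem_nhdsGT_iff_exists_Ioo_subset.1 (hx.eventually (gt_mem_nhds hc1))
  have hδ0 : (0 : ℝ) < δ := hδ
  obtain ⟨m, hm⟩ := exists_nat_ge (max (2 * c.toReal) ((ρ univ).toReal / δ))
  refine ⟨m, fun r hr => ?_⟩
  have hr0 : (0 : ℝ) < r := hr
  rcases lt_or_ge r δ with hrδ | hrδ
  · have h1 := h ⟨hr, hrδ⟩
    rw [mem_ofPred_eq, Real.volume_closedBall] at h1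
    have h2 := (ENNReal.div_le_iff (by simpa using hr0) ENNReal.ofReal_ne_top).1 h1.le
    refine h2.trans ?_
    rw [← ENNReal.ofReal_toReal hc, ← ENNReal.ofReal_mul ENNReal.toReal_nonneg]
    refine ENNReal.ofReal_le_ofReal ?_
    nlinarith [(le_max_left _ _).trans hm]
  · refine (measure_mono (subset_univ _)).trans ?_
    rw [← ENNReal.ofReal_toReal (measure_ne_top ρ univ)]
    refine ENNReal.ofReal_le_ofReal ?_
    have h1 := (div_le_iff₀ hδ0).1 ((le_max_right _ _).trans hm)
    exact h1.trans (by gcongr)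

/-- Right density one at `x` suffices for `SOSDAt F x`. -/
lemma sosdAt_of_small_complement {F : Set ℝ} (hF : MeasurableSet F) {x : ℝ}
    (h : ∀ ε > 0, ∃ δ > 0, ∀ r, 0 < r → r < δ →
      volume (Icc x (x + r) \ F) ≤ ENNReal.ofReal (ε * r)) : SOSDAt F x := by
  have hle : ∀ (u v r : ℝ), 0 < r → v - u = r → (volume (F ∩ Icc u v)).toReal / r ≤ 1 := by
    intro u v r hr huv
    rw [div_le_one hr]
    have h1 : volume (F ∩ Icc u v) ≤ ENNReal.ofReal r := by
      rw [← huv, ← Real.volume_Icc]; exact measure_mono inter_subset_right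
    exact ENNReal.toReal_le_of_le_ofReal hr.le h1
  refine Metric.tendsto_nhds.2 fun ε hε => ?_
  obtain ⟨δ, hδ, hδr⟩ := h (ε / 2) (half_pos hε)
  filter_upwards [Ioo_mem_nhdsGT hδ] with r hr
  have hr0 : 0 < r := hr.1
  have h1 : (volume (Icc x (x + r) \ F)).toReal ≤ ε / 2 * r :=
    ENNReal.toReal_le_of_le_ofReal (by positivity) (hδr r hr.1 hr.2)
  have h2 : volume.real (Icc x (x + r) ∩ F) + volume.real (Icc x (x + r) \ F)
      = volume.real (Icc x (x + r)) :=
    measureReal_inter_add_sdiff hF measure_Icc_lt_top.ne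
  rw [Real.volume_real_Icc_of_le (by linarith), inter_comm] at h2
  have h3 : 1 - ε / 2 ≤ (volume (F ∩ Icc x (x + r))).toReal / r := by
    rw [le_div_iff₀ hr0]
    simp only [Measure.real] at h2
    linarith
  have h4 := max_le (hle (x - r) x r hr0 (by ring)) (hle x (x + r) r hr0 (by ring))
  have h5 := h3.trans (le_max_right ((volume (F ∩ Icc (x - r) x)).toReal / r) _)
  rw [Real.dist_eq, abs_lt]
  constructor <;> linarith

/-- Closed sets `W n` of rapidly summable measure, fat at each of their points, are all avoided by a
nonempty SOSD set of type `F_σ`. -/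
lemma exists_Fsigma_SOSD {W : ℕ → Set ℝ} (hc : ∀ n, IsClosed (W n))
    (hvol : ∑' n, (2 : ℝ≥0∞) ^ n * volume (W n) ≠ ⊤)
    (hfat : ∀ n, ∀ x ∈ W n, ∃ r > 0, ENNReal.ofReal r ≤ volume (W n ∩ closedBall x r)) :
    ∃ F : Set ℝ, (∃ C : ℕ → Set ℝ, (∀ n, IsClosed (C n)) ∧ F = ⋃ n, C n) ∧
      SOSD F ∧ F.Nonempty ∧ ∀ n, Disjoint F (W n) := by
  let ρ : Measure ℝ := Measure.sum fun n => (2 : ℝ≥0∞) ^ n • volume.restrict (W n)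
  have hρ : ∀ s, MeasurableSet s → ρ s = ∑' n, (2 : ℝ≥0∞) ^ n * volume (s ∩ W n) := by
    intro s hs
    simp [ρ, Measure.sum_apply _ hs, Measure.restrict_apply hs]
  have hρfin : IsFiniteMeasure ρ := by
    refine ⟨lt_top_iff_ne_top.2 ?_⟩
    rw [hρ _ MeasurableSet.univ]
    simpa using hvol
  let H : ℕ → Set ℝ := fun m => {x | ∀ r > 0, ρ (closedBall x r) ≤ ENNReal.ofReal (m * r)}
  have hH : ∀ m, IsClosed (H m) := fun m => isClosed_maximal_le ρ m
  -- By fatness `W n` alone forces the maximal function to be at least `2 ^ n` on `W n`.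
  have hHW : ∀ m n x, x ∈ H m → x ∈ W n → n ≤ m := by
    intro m n x hxH hxW
    obtain ⟨r, hr, hrW⟩ := hfat n x hxW
    have h1 : (2 : ℝ≥0∞) ^ n * ENNReal.ofReal r ≤ (m : ℝ≥0∞) * ENNReal.ofReal r := by
      calc (2 : ℝ≥0∞) ^ n * ENNReal.ofReal r
          ≤ 2 ^ n * volume (closedBall x r ∩ W n) := by
            rw [inter_comm]; gcongr
        _ ≤ ρ (closedBall x r) := by
            rw [hρ _ measurableSet_closedBall]
            exact ENNReal.le_tsum (f := fun n => (2 : ℝ≥0∞) ^ n * volume (closedBall x r ∩ W n)) n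
        _ ≤ ENNReal.ofReal (m * r) := hxH r hr
        _ = _ := by rw [ENNReal.ofReal_mul (Nat.cast_nonneg m), ENNReal.ofReal_natCast]
    rw [ENNReal.mul_le_mul_iff_left (by simpa using hr) ENNReal.ofReal_ne_top] at h1
    have h2 : 2 ^ n ≤ m := by exact_mod_cast h1
    exact Nat.lt_two_pow_self.le.trans h2
  have hWm : MeasurableSet (⋃ n, W n) := MeasurableSet.iUnion fun n => (hc n).measurableSet
  let F : Set ℝ := (⋃ m, H m) \ ⋃ n, W n
  have hFm : MeasurableSet F := (MeasurableSet.iUnion fun m => (hH m).measurableSet).diff hWm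
  have hnull : volume (⋃ m, H m)ᶜ = 0 := by
    have h := ae_exists_maximal_le ρ
    rw [ae_iff] at h
    convert h using 2
    ext x
    simp [H]
  have hFc : ∀ s : Set ℝ, volume (s \ F) ≤ ∑' n, volume (s ∩ W n) := by
    intro s
    have hsub : s \ F ⊆ (⋃ m, H m)ᶜ ∪ ⋃ n, s ∩ W n := by
      rintro x ⟨hxs, hxF⟩
      by_cases hx : x ∈ ⋃ m, H m
      · have : x ∈ ⋃ n, W n := by
          by_contra h
          exact hxF ⟨hx, h⟩
        rw [← inter_iUnion]
        exact Or.inr ⟨hxs, this⟩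
      · exact Or.inl hx
    refine (measure_mono hsub).trans ((measure_union_le _ _).trans ?_)
    rw [hnull, zero_add]
    exact measure_iUnion_le _
  refine ⟨F, ?_, ?_, ?_, ?_⟩
  -- `F` is the union over `m` of the closed set `H m` minus the finite closed union of `W n`, `n ≤ m`.
  · have hopen : ∀ m : ℕ, IsOpen (⋃ n ∈ Iic m, W n)ᶜ := fun m =>
      ((finite_Iic m).isClosed_biUnion fun n _ => hc n).isOpen_compl
    choose C hCc _ hCu _ using fun m => IsOpen.exists_iUnion_isClosed (hopen m)
    refine ⟨fun p => H p.unpair.1 ∩ C p.unpair.1 p.unpair.2,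
      fun p => (hH _).inter (hCc _ _), ?_⟩
    rw [Set.iUnion_unpair fun m j => H m ∩ C m j]
    simp only [← inter_iUnion, hCu]
    ext x
    simp only [F, Set.mem_sdiff, mem_iUnion, mem_inter_iff, mem_compl_iff, mem_Iic, not_exists]
    constructor
    · rintro ⟨⟨m, hm⟩, h⟩
      exact ⟨m, hm, fun n _ => h n⟩
    · rintro ⟨m, hm, h⟩
      exact ⟨⟨m, hm⟩, fun n hn => h n (hHW m n x hm hn) hn⟩
  · rintro x ⟨hxH, hxW⟩
    obtain ⟨m, hm⟩ := mem_iUnion.1 hxH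
    refine sosdAt_of_small_complement hFm fun ε hε => ?_
    obtain ⟨N, hN⟩ := pow_unbounded_of_one_lt ((m : ℝ) / ε) (one_lt_two)
    have hopen : IsOpen (⋃ n ∈ Iio N, W n)ᶜ :=
      ((finite_Iio N).isClosed_biUnion fun n _ => hc n).isOpen_compl
    have hx : x ∈ (⋃ n ∈ Iio N, W n)ᶜ := by
      intro h
      obtain ⟨n, -, hn⟩ := mem_iUnion₂.1 h
      exact hxW (mem_iUnion.2 ⟨n, hn⟩)
    obtain ⟨δ, hδ, hball⟩ := Metric.isOpen_iff.1 hopen x hx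
    refine ⟨δ, hδ, fun r hr hrδ => ?_⟩
    have hsub : Icc x (x + r) ⊆ closedBall x r := by
      rw [Real.closedBall_eq_Icc]; exact Icc_subset_Icc (by linarith) le_rfl
    -- Only sets `W n` of index at least `N` meet the ball, and `ρ` gives those weight at least `2 ^ N`.
    have hterm : ∀ n, (2 : ℝ≥0∞) ^ N * volume (Icc x (x + r) ∩ W n)
        ≤ 2 ^ n * volume (closedBall x r ∩ W n) := by
      intro n
      rcases lt_or_ge n N with hn | hn
      · have : Icc x (x + r) ∩ W n = ∅ := by
          refine eq_empty_of_forall_notMem fun y hy => ?_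
          exact hball (closedBall_subset_ball hrδ (hsub hy.1)) (mem_iUnion₂.2 ⟨n, hn, hy.2⟩)
        simp [this]
      · gcongr
        exact one_le_two
    have h1 : (2 : ℝ≥0∞) ^ N * volume (Icc x (x + r) \ F) ≤ ENNReal.ofReal (m * r) := by
      calc (2 : ℝ≥0∞) ^ N * volume (Icc x (x + r) \ F)
          ≤ 2 ^ N * ∑' n, volume (Icc x (x + r) ∩ W n) := by gcongr; exact hFc _
        _ = ∑' n, 2 ^ N * volume (Icc x (x + r) ∩ W n) := ENNReal.tsum_mul_left.symm
        _ ≤ ∑' n, 2 ^ n * volume (closedBall x r ∩ W n) := ENNReal.tsum_le_tsum hterm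
        _ = ρ (closedBall x r) := (hρ _ measurableSet_closedBall).symm
        _ ≤ _ := hm r hr
    have h2 : ENNReal.ofReal (m * r) ≤ 2 ^ N * ENNReal.ofReal (ε * r) := by
      rw [show (2 : ℝ≥0∞) ^ N = ENNReal.ofReal (2 ^ N) by
        rw [ENNReal.ofReal_pow zero_le_two, ENNReal.ofReal_ofNat],
        ← ENNReal.ofReal_mul (by positivity)]
      refine ENNReal.ofReal_le_ofReal ?_
      have := (div_lt_iff₀ hε).1 hN
      nlinarith
    exact (ENNReal.mul_le_mul_iff_right (by positivity) (by finiteness)).1 (h1.trans h2)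
  -- If `F` were empty, the `W n` would cover almost all of `ℝ`, an infinite measure.
  · refine nonempty_iff_ne_empty.2 fun hF => ?_
    have h := hFc univ
    rw [hF, sdiff_empty, Real.volume_univ, top_le_iff] at h
    refine hvol (top_le_iff.1 (h.symm.le.trans (ENNReal.tsum_le_tsum fun n => ?_)))
    rw [univ_inter]
    exact le_mul_of_one_le_left zero_le (one_le_pow₀ one_le_two)
  · exact fun n => Set.disjoint_left.2 fun x hx hxn => hx.2 (mem_iUnion.2 ⟨n, hxn⟩)

/-! ### The counterexample -/

theorem exists_SOSD_Fsigma_not_union_closed_SOSD :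
    ∃ F : Set ℝ, (∃ C : ℕ → Set ℝ, (∀ n, IsClosed (C n)) ∧ F = ⋃ n, C n) ∧
      SOSD F ∧
      ¬ ∃ En : ℕ → Set ℝ, (∀ n, IsClosed (En n) ∧ SOSD (En n)) ∧ F = ⋃ n, En n := by
  obtain ⟨a, L, hL, hdense⟩ := exists_dense_intervals
  choose k hk using fun i : ℕ => exists_cant_volume_le (a i) (L i) (hL i)
    (ε := (2⁻¹ : ℝ≥0∞) ^ i * 2⁻¹ ^ i) (by simp)
  have hvol : ∑' i, (2 : ℝ≥0∞) ^ i * volume (cant (k i) (a i) (L i)) ≠ ⊤ := by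
    have hle : ∀ i, (2 : ℝ≥0∞) ^ i * volume (cant (k i) (a i) (L i)) ≤ 2⁻¹ ^ i := by
      intro i
      refine (mul_le_mul_right (hk i) _).trans_eq ?_
      rw [← mul_assoc, ← mul_pow, ENNReal.mul_inv_cancel two_ne_zero ENNReal.ofNat_ne_top,
        one_pow, one_mul]
    refine ne_top_of_le_ne_top ?_ (ENNReal.tsum_le_tsum hle)
    rw [ENNReal.tsum_geometric, ENNReal.one_sub_inv_two, inv_inv]
    exact ENNReal.ofNat_ne_top
  obtain ⟨F, hFσ, hFS, hFne, hFd⟩ := exists_Fsigma_SOSD (fun i => isClosed_cant (k i) (a i) (L i))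
    hvol (fun i => cant_fat (k i) (a i) (L i) (hL i))
  refine ⟨F, hFσ, hFS, ?_⟩
  rintro ⟨E, hE, hFE⟩
  obtain ⟨x, hx⟩ := hFne
  rw [hFE] at hx
  obtain ⟨n, hn⟩ := mem_iUnion.1 hx
  have hsub : E n ⊆ F := hFE ▸ subset_iUnion E n
  have := eq_empty_of_SOSD (hE n).1 (hE n).2 hL hdense fun i => (hFd i).mono_left hsub
  rw [this] at hn
  exact hn
end

section
/- If E ⊆ ℝ is a closed, strongly one-sided dense set, then E is a lip 1 set; that is, there exists a continuous function f : ℝ → ℝ with lip f = 𝟙_E. -/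
/-!
The witness is `f x = ∫ t in 0..x, 𝟙_E t`, a primitive of the indicator function of `E`. It is
monotone with increment `volume (E ∩ [a, b])` over `[a, b]`, so the supremum defining `Mf f x r` is
attained at one of the two endpoints `x ± r`, and `Mf f x r` is exactly the maximum of the two
one-sided densities of `E` at `x` (`Mf_prim`). By strong one-sided density this maximum tends to `1`
at each point of `E`; off `E`, which is closed, it vanishes for all small `r`.
-/

open MeasureTheory Filter Set

/-- The primitive, normalized at `0`, of the indicator function of `E`. -/
noncomputable def prim (E : Set ℝ) (x : ℝ) : ℝ :=
  ∫ t in (0 : ℝ)..x, E.indicator (fun _ => (1 : ℝ)) t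

lemma intervalIntegrable_indicator_one {E : Set ℝ} (hE : MeasurableSet E) (a b : ℝ) :
    IntervalIntegrable (E.indicator (fun _ => (1 : ℝ))) volume a b :=
  ⟨(integrable_const (1 : ℝ)).indicator hE, (integrable_const (1 : ℝ)).indicator hE⟩

lemma prim_sub {E : Set ℝ} (hE : MeasurableSet E) {a b : ℝ} (hab : a ≤ b) :
    prim E b - prim E a = (volume (E ∩ Icc a b)).toReal := by
  unfold prim
  rw [intervalIntegral.integral_interval_sub_left (intervalIntegrable_indicator_one hE 0 b)
    (intervalIntegrable_indicator_one hE 0 a), intervalIntegral.integral_of_le hab,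
    ← integral_Icc_eq_integral_Ioc, integral_indicator_const _ hE]
  simp [Measure.real, Measure.restrict_apply hE]

lemma vol_inter_Icc_mono (E : Set ℝ) {a b c d : ℝ} (hca : c ≤ a) (hbd : b ≤ d) :
    (volume (E ∩ Icc a b)).toReal ≤ (volume (E ∩ Icc c d)).toReal :=
  ENNReal.toReal_mono
    ((measure_mono inter_subset_right).trans_lt measure_Icc_lt_top).ne
    (measure_mono (inter_subset_inter_right E (Icc_subset_Icc hca hbd)))

lemma continuous_prim {E : Set ℝ} (hE : MeasurableSet E) : Continuous (prim E) :=
  intervalIntegral.continuous_primitive (intervalIntegrable_indicator_one hE) 0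

/-- For the primitive of `𝟙_E`, the quotient `Mf` is the larger of the one-sided densities of `E`. -/
lemma Mf_prim {E : Set ℝ} (hE : MeasurableSet E) (x : ℝ) {r : ℝ} (hr : 0 < r) :
    Mf (prim E) x r = max ((volume (E ∩ Icc (x - r) x)).toReal / r)
      ((volume (E ∩ Icc x (x + r))).toReal / r) := by
  have hl {y : ℝ} (hy : y ≤ x) :
      |prim E x - prim E y| = (volume (E ∩ Icc y x)).toReal := by
    rw [prim_sub hE hy, abs_of_nonneg ENNReal.toReal_nonneg]
  have hu {y : ℝ} (hy : x ≤ y) :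
      |prim E x - prim E y| = (volume (E ∩ Icc x y)).toReal := by
    rw [abs_sub_comm, prim_sub hE hy, abs_of_nonneg ENNReal.toReal_nonneg]
  have key : IsGreatest {d : ℝ | ∃ y : ℝ, |x - y| ≤ r ∧ d = |prim E x - prim E y|}
      (max (volume (E ∩ Icc (x - r) x)).toReal (volume (E ∩ Icc x (x + r))).toReal) := by
    constructor
    · rcases max_choice (volume (E ∩ Icc (x - r) x)).toReal
        (volume (E ∩ Icc x (x + r))).toReal with h | h <;> rw [h]
      · exact ⟨x - r, by simp [abs_of_pos hr], (hl (by linarith)).symm⟩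
      · exact ⟨x + r, by simp [abs_of_pos hr], (hu (by linarith)).symm⟩
    · rintro d ⟨y, hy, rfl⟩
      have hy' := abs_le.1 hy
      rcases le_total y x with h | h
      · rw [hl h]
        exact le_max_of_le_left (vol_inter_Icc_mono E (by linarith) le_rfl)
      · rw [hu h]
        exact le_max_of_le_right (vol_inter_Icc_mono E le_rfl (by linarith))
  rw [Mf, key.csSup_eq, max_div_div_right hr.le]

theorem closed_SOSD_isLip1 (E : Set ℝ) (hclosed : IsClosed E) (hsosd : SOSD E) :
    ∃ f : ℝ → ℝ, Continuous f ∧ lip f = E.indicator (fun _ => (1 : ℝ)) := by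
  have hE := hclosed.measurableSet
  refine ⟨prim E, continuous_prim hE, ?_⟩
  ext x
  by_cases hx : x ∈ E
  · rw [indicator_of_mem hx]
    refine Tendsto.liminf_eq ((hsosd x hx).congr' ?_)
    filter_upwards [self_mem_nhdsWithin] with r hr
    exact (Mf_prim hE x hr).symm
  · rw [indicator_of_notMem hx]
    obtain ⟨ε, hε, hball⟩ := Metric.isOpen_iff.1 hclosed.isOpen_compl x hx
    refine Tendsto.liminf_eq ((tendsto_const_nhds (x := (0 : ℝ))).congr' ?_)
    filter_upwards [Ioo_mem_nhdsGT hε] with r hr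
    have hr0 : 0 < r := hr.1
    have hrε : r < ε := hr.2
    have hempty {a b : ℝ} (ha : x - r ≤ a) (hb : b ≤ x + r) : E ∩ Icc a b = ∅ := by
      refine eq_empty_of_forall_notMem fun y hy => hball ?_ hy.1
      rw [Metric.mem_ball, Real.dist_eq, abs_lt]
      constructor <;> linarith [hy.2.1, hy.2.2]
    rw [Mf_prim hE x hr0, hempty le_rfl (by linarith), hempty (by linarith) le_rfl]
    simp
end

section
/- Let C ⊆ ℝ be a closed set which does not contain any nonempty, closed, strongly one-sided dense subset. Then the set of points x ∈ C at which C is not strongly one-sided dense is dense in C. -/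
/-!
Suppose some `x ∈ C` has a neighbourhood `(a, b)` such that `C` is strongly one-sided dense at every
point of `C ∩ (a, b)`. If `C` contains a nondegenerate closed interval, that interval is a closed
strongly one-sided dense subset (`SOSD_Icc`). Otherwise there are points `c ∈ (a, x)` and
`d ∈ (x, b)` outside `C`. Then `C ∩ [c, d] = C ∩ (c, d)` is closed, contains `x`, and coincides with
`C` near each of its points; strong one-sided density being local (`SOSDAt.congr_Ioo`), this set is
strongly one-sided dense. Both cases contradict the hypothesis on `C`.
-/

open MeasureTheory Filter Set

lemma volume_inter_Icc_div_le_one (E : Set ℝ) {u v r : ℝ} (hr : 0 < r) (h : v - u = r) :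
    (volume (E ∩ Icc u v)).toReal / r ≤ 1 := by
  rw [div_le_one hr]
  refine ENNReal.toReal_le_of_le_ofReal hr.le ?_
  calc volume (E ∩ Icc u v) ≤ volume (Icc u v) := measure_mono inter_subset_right
    _ = ENNReal.ofReal r := by rw [Real.volume_Icc, h]

lemma volume_inter_Icc_div_eq_one {E : Set ℝ} {u v r : ℝ} (hr : 0 < r) (h : v - u = r)
    (hE : Icc u v ⊆ E) : (volume (E ∩ Icc u v)).toReal / r = 1 := by
  rw [inter_eq_right.mpr hE, Real.volume_Icc, h, ENNReal.toReal_ofReal hr.le, div_self hr.ne']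

lemma SOSD_Icc {c d : ℝ} (hcd : c < d) : SOSD (Icc c d) := by
  rintro x ⟨hcx, hxd⟩
  refine tendsto_const_nhds.congr' ?_
  rcases hxd.lt_or_eq with hlt | rfl
  · filter_upwards [Ioo_mem_nhdsGT (sub_pos.mpr hlt)] with r ⟨hr, hr'⟩
    rw [volume_inter_Icc_div_eq_one (u := x) hr (by ring)
      (Icc_subset_Icc hcx (by linarith)), max_eq_right]
    exact volume_inter_Icc_div_le_one _ hr (by ring)
  · filter_upwards [Ioo_mem_nhdsGT (sub_pos.mpr hcd)] with r ⟨hr, hr'⟩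
    rw [volume_inter_Icc_div_eq_one (v := x) hr (by ring)
      (Icc_subset_Icc (by linarith) le_rfl), max_eq_left]
    exact volume_inter_Icc_div_le_one _ hr (by ring)

/-- Strong one-sided density at `x` depends only on the set near `x`. -/
lemma SOSDAt.congr_Ioo {E F : Set ℝ} {x c d : ℝ} (h : SOSDAt E x) (hx : x ∈ Ioo c d)
    (hEF : ∀ y ∈ Ioo c d, y ∈ E ↔ y ∈ F) : SOSDAt F x := by
  refine Tendsto.congr' ?_ h
  filter_upwards [Ioo_mem_nhdsGT (lt_min (sub_pos.mpr hx.1) (sub_pos.mpr hx.2))] with r ⟨hr, hr'⟩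
  have h₁ := lt_min_iff.mp hr'
  have hl : E ∩ Icc (x - r) x = F ∩ Icc (x - r) x := by
    ext y
    refine and_congr_left fun hy => hEF y ⟨?_, ?_⟩ <;> linarith [hy.1, hy.2]
  have hu : E ∩ Icc x (x + r) = F ∩ Icc x (x + r) := by
    ext y
    refine and_congr_left fun hy => hEF y ⟨?_, ?_⟩ <;> linarith [hy.1, hy.2]
  rw [hl, hu]

theorem non_SOSD_points_dense (C : Set ℝ) (hC : IsClosed C)
    (hno : ¬ ∃ F' : Set ℝ, F' ⊆ C ∧ F'.Nonempty ∧ IsClosed F' ∧ SOSD F') :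
    C ⊆ closure {x ∈ C | ¬ SOSDAt C x} := by
  have hgap : ∀ u v : ℝ, u < v → ∃ y ∈ Ioo u v, y ∉ C := by
    intro u v huv
    by_contra! hI
    obtain ⟨s, hus, hsv⟩ := exists_between huv
    obtain ⟨t, hst, htv⟩ := exists_between hsv
    exact hno ⟨Icc s t, fun y hy => hI y ⟨hus.trans_le hy.1, hy.2.trans_lt htv⟩,
      nonempty_Icc.mpr hst.le, isClosed_Icc, SOSD_Icc hst⟩
  intro x hxC
  by_contra hx
  obtain ⟨a, b, ⟨hax, hxb⟩, hab⟩ :=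
    mem_nhds_iff_exists_Ioo_subset.mp (isClosed_closure.isOpen_compl.mem_nhds hx)
  have hdens : ∀ y ∈ C, y ∈ Ioo a b → SOSDAt C y := fun y hy hyab =>
    by_contra fun hn => hab hyab (subset_closure ⟨hy, hn⟩)
  obtain ⟨c, ⟨hac, hcx⟩, hcC⟩ := hgap a x hax
  obtain ⟨d, ⟨hxd, hdb⟩, hdC⟩ := hgap x b hxb
  refine hno ⟨C ∩ Icc c d, inter_subset_left, ⟨x, hxC, hcx.le, hxd.le⟩,
    hC.inter isClosed_Icc, ?_⟩
  rintro y ⟨hyC, hcy, hyd⟩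
  have hcy' : c < y := hcy.lt_of_ne fun h => hcC (h ▸ hyC)
  have hyd' : y < d := hyd.lt_of_ne fun h => hdC (h ▸ hyC)
  exact (hdens y hyC ⟨hac.trans hcy', hyd'.trans hdb⟩).congr_Ioo ⟨hcy', hyd'⟩
    fun z hz => ⟨fun h => ⟨h, hz.1.le, hz.2.le⟩, fun h => h.1⟩
end

section
/- There exists a sequence (F_n)_{n=1}^∞ of pairwise disjoint closed subsets of ℝ such that no F_n contains a nonempty, closed, strongly one-sided dense subset, and the union F = ⋃_{n=1}^∞ F_n has full Lebesgue measure in ℝ (i.e., the complement ℝ \ F is Lebesgue null). -/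
/-!
The obstruction to strong one-sided density is the stage-`k` ternary Cantor set, used as a set to be
*deleted*. The set `cantorGap k L a` is a union of `2 ^ k` open triadic intervals in `(a, a + L)` of
total length at most `(2 / 3) ^ k * L`, which is arbitrarily small. Nevertheless, if `K` avoids it
and at each point of a relatively dense subset of `K` one of the two one-sided densities at every
small scale exceeds `2 / 3`, then `K` misses all of `(a, a + L)` (`eq_empty_of_cantorGap`): a point
in the middle third between two empty thirds sees density at most `2 / 3` on both sides at scale
`L / 2`, so the middle third is empty as well, and one climbs up the triadic tree.

Placing such gap sets in all cells of the lattice `L ℤ` gives open sets of arbitrarily small measure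
(`exists_trap`). Let `G n` be such a set for `L = 1 / (n + 1)`, of measure at most `2⁻ⁿ`. A nonempty
closed SOSD set `K` avoiding `G n` for all `n ≥ j` cannot exist (`not_SOSD_of_disjoint`): by Baire, a
uniform version of the density condition holds on a dense subset of a portion of `K`, so that portion
is contained in a lattice and is null, which contradicts density. By Borel–Cantelli, almost every
point avoids `G n` for all large `n`, and an exhaustion by compact sets (`exists_disjoint_exhaustion`)
makes the pieces pairwise disjoint.
-/

open MeasureTheory Filter Set

/-- The `k`-th stage of the middle-thirds construction of the Cantor set on `(a, a + L)`, made of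
open intervals. -/
def cantorGap : ℕ → ℝ → ℝ → Set ℝ
  | 0, L, a => Ioo a (a + L)
  | k + 1, L, a => cantorGap k (L / 3) a ∪ cantorGap k (L / 3) (a + 2 * L / 3)

lemma isOpen_cantorGap (k : ℕ) (L a : ℝ) : IsOpen (cantorGap k L a) := by
  induction k generalizing L a with
  | zero => exact isOpen_Ioo
  | succ k ih => exact (ih _ _).union (ih _ _)

lemma volume_cantorGap_le (k : ℕ) (L a : ℝ) (hL : 0 ≤ L) :
    volume (cantorGap k L a) ≤ ENNReal.ofReal ((2 / 3) ^ k * L) := by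
  induction k generalizing L a with
  | zero => simp [cantorGap]
  | succ k ih =>
    calc volume (cantorGap (k + 1) L a)
        ≤ volume (cantorGap k (L / 3) a) + volume (cantorGap k (L / 3) (a + 2 * L / 3)) :=
          measure_union_le _ _
      _ ≤ ENNReal.ofReal ((2 / 3) ^ k * (L / 3)) + ENNReal.ofReal ((2 / 3) ^ k * (L / 3)) :=
          add_le_add (ih _ _ (by positivity)) (ih _ _ (by positivity))
      _ = ENNReal.ofReal ((2 / 3) ^ (k + 1) * L) := by
          rw [← ENNReal.ofReal_add (by positivity) (by positivity)]
          congr 1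
          ring

lemma toReal_volume_le_of_subset_Icc_union {S : Set ℝ} {p q u v t : ℝ}
    (h : S ⊆ Icc p q ∪ Icc u v) (ht : max (q - p) 0 + max (v - u) 0 ≤ t) :
    (volume S).toReal ≤ t := by
  have ht0 : 0 ≤ t := le_trans (by positivity) ht
  refine ENNReal.toReal_le_of_le_ofReal ht0 ?_
  calc volume S ≤ volume (Icc p q) + volume (Icc u v) :=
        (measure_mono h).trans (measure_union_le _ _)
    _ = ENNReal.ofReal (max (q - p) 0) + ENNReal.ofReal (max (v - u) 0) := by simp
    _ ≤ ENNReal.ofReal t := by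
        rw [← ENNReal.ofReal_add (by positivity) (by positivity)]
        exact ENNReal.ofReal_le_ofReal ht

/-- A point of the middle third, when `K` misses both outer thirds, sees `K` with density at most
`2 / 3` on either side at scale `L / 2`. -/
lemma oneSidedDensity_le_of_middle {K : Set ℝ} {L a x : ℝ} (hL : 0 < L)
    (h1 : K ∩ Ioo a (a + L / 3) = ∅) (h2 : K ∩ Ioo (a + 2 * L / 3) (a + L) = ∅)
    (hx1 : a + L / 3 ≤ x) (hx2 : x ≤ a + 2 * L / 3) :
    oneSidedDensity K x (L / 2) ≤ 2 / 3 := by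
  have e1 : ∀ y ∈ K, a < y → y < a + L / 3 → False := fun y hy p q =>
    (h1 ▸ (⟨hy, p, q⟩ : y ∈ K ∩ Ioo a (a + L / 3)) : y ∈ (∅ : Set ℝ))
  have e2 : ∀ y ∈ K, a + 2 * L / 3 < y → y < a + L → False := fun y hy p q =>
    (h2 ▸ (⟨hy, p, q⟩ : y ∈ K ∩ Ioo (a + 2 * L / 3) (a + L)) : y ∈ (∅ : Set ℝ))
  have hL2 : 0 < L / 2 := by positivity
  refine max_le ?_ ?_
  · rw [div_le_iff₀ hL2]
    refine toReal_volume_le_of_subset_Icc_union (p := x - L / 2) (q := a)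
      (u := a + L / 3) (v := x) ?_ ?_
    · rintro y ⟨hy, hy1, hy2⟩
      by_cases h : y ≤ a
      · exact Or.inl ⟨hy1, h⟩
      · exact Or.inr ⟨by by_contra hc; exact e1 y hy (not_le.1 h) (not_le.1 hc), hy2⟩
    · rcases max_cases (a - (x - L / 2)) 0 with h | h <;>
      rcases max_cases (x - (a + L / 3)) 0 with h' | h' <;> linarith
  · rw [div_le_iff₀ hL2]
    refine toReal_volume_le_of_subset_Icc_union (p := x) (q := a + 2 * L / 3)
      (u := a + L) (v := x + L / 2) ?_ ?_
    · rintro y ⟨hy, hy1, hy2⟩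
      by_cases h : y ≤ a + 2 * L / 3
      · exact Or.inl ⟨hy1, h⟩
      · exact Or.inr ⟨by by_contra hc; exact e2 y hy (not_le.1 h) (not_le.1 hc), hy2⟩
    · rcases max_cases (a + 2 * L / 3 - x) 0 with h | h <;>
      rcases max_cases (x + L / 2 - (a + L)) 0 with h' | h' <;> linarith

/-- If `K` avoids a Cantor gap set in `(a, a + L)` and has large one-sided densities at the points
of a subset `A` dense in `K ∩ (a, a + L)`, then `K` misses the whole interval. -/
lemma eq_empty_of_cantorGap {K A : Set ℝ} {δ : ℝ} (hAK : A ⊆ K)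
    (hA : ∀ x ∈ A, ∀ r, 0 < r → r < δ → 2 / 3 < oneSidedDensity K x r)
    (k : ℕ) (L a : ℝ) (hL : 0 < L) (hLδ : L < δ)
    (hd : ∀ u v, Ioo u v ⊆ Ioo a (a + L) → (K ∩ Ioo u v).Nonempty → (A ∩ Ioo u v).Nonempty)
    (hK : K ∩ cantorGap k L a = ∅) : K ∩ Ioo a (a + L) = ∅ := by
  induction k generalizing L a with
  | zero => exact hK
  | succ k ih =>
    have hK' : K ∩ cantorGap k (L / 3) a ∪ K ∩ cantorGap k (L / 3) (a + 2 * L / 3) = ∅ := by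
      rw [← inter_union_distrib_left]
      exact hK
    rw [union_empty_iff] at hK'
    have h1 : K ∩ Ioo a (a + L / 3) = ∅ :=
      ih (L / 3) a (by linarith) (by linarith)
        (fun u v h => hd u v (h.trans (Ioo_subset_Ioo_right (by linarith)))) hK'.1
    have e : a + 2 * L / 3 + L / 3 = a + L := by ring
    have h2 : K ∩ Ioo (a + 2 * L / 3) (a + L) = ∅ := by
      have := ih (L / 3) (a + 2 * L / 3) (by linarith) (by linarith)
        (fun u v h => hd u v (h.trans (Ioo_subset_Ioo (by linarith) e.le))) hK'.2
      rwa [e] at this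
    by_contra hne
    obtain ⟨x, hxA, hx1, hx2⟩ := hd a (a + L) le_rfl (nonempty_iff_ne_empty.2 hne)
    have hx1' : a + L / 3 ≤ x := by
      by_contra hc
      exact (h1 ▸ (⟨hAK hxA, hx1, not_le.1 hc⟩ : x ∈ K ∩ Ioo a (a + L / 3)) : x ∈ (∅ : Set ℝ))
    have hx2' : x ≤ a + 2 * L / 3 := by
      by_contra hc
      exact (h2 ▸ (⟨hAK hxA, not_le.1 hc, hx2⟩ : x ∈ K ∩ Ioo (a + 2 * L / 3) (a + L)) :
        x ∈ (∅ : Set ℝ))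
    have := hA x hxA (L / 2) (by linarith) (by linarith)
    linarith [oneSidedDensity_le_of_middle hL h1 h2 hx1' hx2']

/-- An open set of small measure containing a Cantor gap set in each cell of the lattice `L ℤ`. -/
lemma exists_trap (L : ℝ) (hL : 0 < L) (ε : ENNReal) (hε : ε ≠ 0) :
    ∃ G : Set ℝ, IsOpen G ∧ volume G ≤ ε ∧ ∀ i : ℤ, ∃ k, cantorGap k L (i * L) ⊆ G := by
  obtain ⟨ε', hε', hsum⟩ := ENNReal.exists_pos_sum_of_countable' hε ℤ
  have hk : ∀ i : ℤ, ∃ k : ℕ, ENNReal.ofReal ((2 / 3) ^ k * L) ≤ ε' i := by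
    intro i
    have : Tendsto (fun k : ℕ => ENNReal.ofReal ((2 / 3) ^ k * L)) atTop (nhds 0) := by
      have h := (tendsto_pow_atTop_nhds_zero_of_lt_one (r := (2 / 3 : ℝ)) (by norm_num)
        (by norm_num)).mul_const L
      simpa using ENNReal.tendsto_ofReal h
    obtain ⟨k, hk⟩ := (this.eventually (gt_mem_nhds (hε' i))).exists
    exact ⟨k, hk.le⟩
  choose k hk using hk
  refine ⟨⋃ i : ℤ, cantorGap (k i) L (i * L), isOpen_iUnion fun i => isOpen_cantorGap _ _ _, ?_,
    fun i => ⟨k i, subset_iUnion (fun i : ℤ => cantorGap (k i) L (i * L)) i⟩⟩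
  calc volume (⋃ i : ℤ, cantorGap (k i) L (i * L))
      ≤ ∑' i : ℤ, volume (cantorGap (k i) L (i * L)) := measure_iUnion_le _
    _ ≤ ∑' i, ε' i :=
        ENNReal.tsum_le_tsum fun i => (volume_cantorGap_le _ _ _ hL.le).trans (hk i)
    _ ≤ ε := hsum.le

/-! ### Closed SOSD sets meet the gap sets -/

/-- Baire category: on a portion of a closed SOSD set, the one-sided densities are large at a
uniform range of scales for a relatively dense set of points. -/
lemma exists_uniform_portion {K : Set ℝ} (hKc : IsClosed K) (hKne : K.Nonempty) (hK : SOSD K) :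
    ∃ (A U : Set ℝ) (δ : ℝ), 0 < δ ∧ A ⊆ K ∧ IsOpen U ∧ (U ∩ K).Nonempty ∧ U ∩ K ⊆ closure A ∧
      ∀ x ∈ A, ∀ r, 0 < r → r < δ → 2 / 3 < oneSidedDensity K x r := by
  let A : ℕ → Set ℝ := fun n =>
    {x | x ∈ K ∧ ∀ r, 0 < r → r < 1 / ((n : ℝ) + 1) → 2 / 3 < oneSidedDensity K x r}
  have hcov : ∀ x ∈ K, ∃ n, x ∈ A n := by
    intro x hx
    have h1 : ∀ᶠ r in nhdsWithin (0 : ℝ) (Ioi 0), 2 / 3 < oneSidedDensity K x r :=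
      (hK x hx).eventually (lt_mem_nhds (by norm_num))
    obtain ⟨d, hd, hsub⟩ := mem_nhdsGT_iff_exists_Ioo_subset.1 h1
    obtain ⟨n, hn⟩ := exists_nat_one_div_lt (show (0 : ℝ) < d from hd)
    exact ⟨n, hx, fun r h0 hr => hsub ⟨h0, hr.trans hn⟩⟩
  have : Nonempty K := hKne.to_subtype
  have : CompleteSpace K := hKc.completeSpace_coe
  obtain ⟨n, hn⟩ := nonempty_interior_of_iUnion_of_closed
    (f := fun n => closure ((↑) ⁻¹' A n : Set K)) (fun n => isClosed_closure) (by
      refine eq_univ_of_forall fun x => ?_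
      obtain ⟨n, hn⟩ := hcov x x.2
      exact mem_iUnion.2 ⟨n, subset_closure hn⟩)
  obtain ⟨x, hx⟩ := hn
  obtain ⟨V, hV, hVo, hxV⟩ := mem_interior.1 hx
  obtain ⟨U, hU, rfl⟩ := isOpen_induced_iff.1 hVo
  refine ⟨A n, U, 1 / ((n : ℝ) + 1), by positivity, fun y hy => hy.1, hU, ⟨x, hxV, x.2⟩, ?_,
    fun y hy => hy.2⟩
  rintro y ⟨hyU, hyK⟩
  have h := hV (show (⟨y, hyK⟩ : K) ∈ (↑) ⁻¹' U from hyU)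
  have h2 := image_closure_subset_closure_image continuous_subtype_val (mem_image_of_mem _ h)
  exact closure_mono (image_preimage_subset _ _) h2

/-- A nonempty closed SOSD set cannot avoid the gap sets of arbitrarily fine lattices. -/
lemma not_SOSD_of_disjoint {G : ℕ → Set ℝ}
    (hG : ∀ (n : ℕ) (i : ℤ), ∃ k, cantorGap k (1 / ((n : ℝ) + 1)) (i * (1 / ((n : ℝ) + 1))) ⊆ G n)
    {K : Set ℝ} (hKc : IsClosed K) (hKne : K.Nonempty) {j : ℕ}
    (hKG : ∀ n, j ≤ n → Disjoint K (G n)) : ¬ SOSD K := by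
  intro hK
  obtain ⟨A, U, δ, hδ, hAK, hU, ⟨x, hxU, hxK⟩, hUA, hA⟩ := exists_uniform_portion hKc hKne hK
  obtain ⟨y, hyU, hyA⟩ := mem_closure_iff.1 (hUA ⟨hxU, hxK⟩) U hU hxU
  obtain ⟨ρ, hρ, hball⟩ := Metric.isOpen_iff.1 hU y hyU
  obtain ⟨r, hr, hrρ, hrδ⟩ : ∃ r, 0 < r ∧ 2 * r < ρ ∧ r < δ :=
    ⟨min ρ δ / 3, by positivity, by linarith [min_le_left ρ δ, lt_min hρ hδ],
      by linarith [min_le_right ρ δ, lt_min hρ hδ]⟩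
  obtain ⟨m, hm⟩ := exists_nat_one_div_lt hr
  let n := max m j
  set L : ℝ := 1 / ((n : ℝ) + 1) with hLdef
  have hL : 0 < L := by positivity
  have hLr : L < r := by
    refine lt_of_le_of_lt ?_ hm
    have : (m : ℝ) ≤ n := by exact_mod_cast le_max_left m j
    exact one_div_le_one_div_of_le (by positivity) (by linarith)
  have hlat : K ∩ Icc (y - r) (y + r) ⊆ range (fun i : ℤ => (i : ℝ) * L) := by
    rintro z ⟨hzK, hz1, hz2⟩
    have hi1 : (⌊z / L⌋ : ℝ) * L ≤ z := (le_div_iff₀ hL).1 (Int.floor_le _)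
    have hi2 : z < (⌊z / L⌋ : ℝ) * L + L := by
      have := (div_lt_iff₀ hL).1 (Int.lt_floor_add_one (z / L))
      linarith
    rcases hi1.eq_or_lt with h | h
    · exact ⟨_, h⟩
    exfalso
    obtain ⟨k, hk⟩ := hG n ⌊z / L⌋
    have hcell : Ioo ((⌊z / L⌋ : ℝ) * L) ((⌊z / L⌋ : ℝ) * L + L) ⊆ U := by
      refine Subset.trans ?_ hball
      rw [Real.ball_eq_Ioo]
      exact Ioo_subset_Ioo (by linarith) (by linarith)
    have hempty := eq_empty_of_cantorGap hAK hA k L (⌊z / L⌋ * L) hL (by linarith)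
      (by
        rintro u v huv ⟨w, hwK, hw⟩
        obtain ⟨w', hw', hw'A⟩ := mem_closure_iff.1 (hUA ⟨hcell (huv hw), hwK⟩) _ isOpen_Ioo hw
        exact ⟨w', hw'A, hw'⟩)
      (((hKG n (le_max_right m j)).mono_right hk).inter_eq)
    exact (hempty ▸ (⟨hzK, h, hi2⟩ :
      z ∈ K ∩ Ioo ((⌊z / L⌋ : ℝ) * L) ((⌊z / L⌋ : ℝ) * L + L)) : z ∈ (∅ : Set ℝ))
  have hnull : volume (K ∩ Icc (y - r) (y + r)) = 0 :=
    ((countable_range _).mono hlat).measure_zero _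
  have hn1 : volume (K ∩ Icc (y - r) y) = 0 :=
    measure_mono_null (inter_subset_inter_right _ (Icc_subset_Icc_right (by linarith))) hnull
  have hn2 : volume (K ∩ Icc y (y + r)) = 0 :=
    measure_mono_null (inter_subset_inter_right _ (Icc_subset_Icc_left (by linarith))) hnull
  have := hA y hyA r hr hrδ
  simp only [oneSidedDensity, hn1, hn2, ENNReal.toReal_zero, zero_div, max_self] at this
  linarith

/-! ### Exhaustion by disjoint closed sets -/

/-- If almost every point lies in all but finitely many of the closed sets `C n`, then pairwise
disjoint closed sets `F n ⊆ C n` can be chosen greedily so that they cover almost everything. -/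
lemma exists_disjoint_exhaustion (C : ℕ → Set ℝ) (hC : ∀ n, IsClosed (C n))
    (hcov : ∀ᵐ x, ∀ᶠ n in atTop, x ∈ C n) :
    ∃ F : ℕ → Set ℝ, (∀ n, IsClosed (F n)) ∧ Pairwise (Function.onFun Disjoint F) ∧
      (∀ n, F n ⊆ C n) ∧ volume ((⋃ n, F n)ᶜ) = 0 := by
  let B : ℕ → Set ℝ := fun n => C n ∩ Icc (-(n : ℝ)) n
  have step : ∀ (n : ℕ) (U : TopologicalSpace.Closeds ℝ), ∃ F : Set ℝ, IsClosed F ∧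
      F ⊆ B n \ U ∧ volume ((B n \ U) \ F) ≤ 2⁻¹ ^ n := by
    intro n U
    have hm : MeasurableSet (B n \ (U : Set ℝ)) :=
      ((hC n).measurableSet.inter measurableSet_Icc).diff U.isClosed.measurableSet
    have hfin : volume (B n \ (U : Set ℝ)) ≠ ⊤ :=
      measure_ne_top_of_subset (sdiff_subset.trans inter_subset_right) (by simp)
    obtain ⟨F, hF, hFc, hFv⟩ := hm.exists_isCompact_sdiff_lt hfin
      (ε := 2⁻¹ ^ n) (pow_ne_zero _ (by simp))
    exact ⟨F, hFc.isClosed, hF, hFv.le⟩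
  choose f hfc hfs hfv using step
  -- `U n` is the union of the sets chosen before step `n`.
  let U : ℕ → TopologicalSpace.Closeds ℝ := fun n =>
    Nat.rec (motive := fun _ => TopologicalSpace.Closeds ℝ) ⊥
      (fun n V => V ⊔ ⟨f n V, hfc n V⟩) n
  have hUs : ∀ n : ℕ, (U (n + 1) : Set ℝ) = (U n : Set ℝ) ∪ f n (U n) := fun n =>
    TopologicalSpace.Closeds.coe_sup (U n) ⟨f n (U n), hfc n (U n)⟩
  have hUmono : Monotone fun n => (U n : Set ℝ) :=
    monotone_nat_of_le_succ fun n => by rw [hUs]; exact subset_union_left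
  have hUsub : ∀ n, (U n : Set ℝ) ⊆ ⋃ m, f m (U m) := by
    intro n
    induction n with
    | zero => exact fun x hx => hx.elim
    | succ n ih =>
      rw [hUs]
      exact union_subset ih (subset_iUnion (fun m => f m (U m)) n)
  have hlt : ∀ m n, m < n → Disjoint (f m (U m)) (f n (U n)) := by
    intro m n hmn
    have h1 : f m (U m) ⊆ U n := by
      refine Subset.trans ?_ (hUmono (Nat.succ_le_of_lt hmn))
      simp only [Nat.succ_eq_add_one, hUs]
      exact subset_union_right
    exact (disjoint_sdiff_right.mono_right (hfs n (U n))).mono_left h1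
  refine ⟨fun n => f n (U n), fun n => hfc _ _, ?_,
    fun n => (hfs n (U n)).trans (sdiff_subset.trans inter_subset_left), ?_⟩
  · intro m n hmn
    rcases lt_or_gt_of_ne hmn with h | h
    · exact hlt m n h
    · exact (hlt n m h).symm
  -- A point of `B n` left uncovered lies in the `n`-th remainder, and almost no point lies in
  -- infinitely many remainders.
  have hrem : ∀ᵐ x, ∀ᶠ n in atTop, x ∉ (B n \ (U n : Set ℝ)) \ f n (U n) := by
    refine ae_eventually_notMem (ne_top_of_le_ne_top ?_
      (ENNReal.tsum_le_tsum fun n => hfv n (U n)))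
    rw [ENNReal.tsum_geometric]
    simp
  change ∀ᵐ x, x ∈ ⋃ n, f n (U n)
  filter_upwards [hcov, hrem] with x hx hx'
  obtain ⟨N, hN⟩ := exists_nat_ge |x|
  obtain ⟨n, h1, h2, h3⟩ := (hx.and (hx'.and (eventually_ge_atTop N))).exists
  have hxn : |x| ≤ n := hN.trans (by exact_mod_cast h3)
  by_contra hc
  exact h2 ⟨⟨⟨h1, abs_le.1 hxn⟩, fun h => hc (hUsub n h)⟩, fun h => hc (mem_iUnion.2 ⟨n, h⟩)⟩

theorem exists_disjoint_closed_no_SOSD_subset_full_measure :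
    ∃ F : ℕ → Set ℝ, (∀ n, IsClosed (F n)) ∧ Pairwise (Function.onFun Disjoint F) ∧
      (∀ n, ¬ ∃ F' : Set ℝ, F' ⊆ F n ∧ F'.Nonempty ∧ IsClosed F' ∧ SOSD F') ∧
      volume ((⋃ n, F n)ᶜ) = 0 := by
  choose G hGo hGv hG using fun n : ℕ => exists_trap (1 / ((n : ℝ) + 1)) (by positivity)
    (2⁻¹ ^ n) (pow_ne_zero _ (by simp))
  have hae : ∀ᵐ x, ∀ᶠ n in atTop, x ∉ G n := by
    refine ae_eventually_notMem (ne_top_of_le_ne_top ?_ (ENNReal.tsum_le_tsum hGv))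
    rw [ENNReal.tsum_geometric]
    simp
  obtain ⟨F, hFc, hFd, hFC, hFv⟩ := exists_disjoint_exhaustion
    (fun j => ⋂ n, ⋂ (_ : j ≤ n), (G n)ᶜ)
    (fun j => isClosed_iInter fun n => isClosed_iInter fun _ => (hGo n).isClosed_compl) (by
      filter_upwards [hae] with x hx
      obtain ⟨N, hN⟩ := eventually_atTop.1 hx
      filter_upwards [eventually_ge_atTop N] with j hj
      exact mem_iInter₂.2 fun n hn => hN n (hj.trans hn))
  refine ⟨F, hFc, hFd, ?_, hFv⟩
  rintro j ⟨K, hKF, hKne, hKc, hK⟩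
  refine not_SOSD_of_disjoint hG hKc hKne (j := j) (fun n hn => ?_) hK
  exact disjoint_left.2 fun x hx => mem_iInter₂.1 (hFC j (hKF hx)) n hn
end

section
/- Let E₁ ⊆ E₂ ⊆ E₃ ⊆ … be an increasing sequence of closed, strongly one-sided dense subsets of ℝ with E₁ nonempty, and let E = ⋃_{n=1}^∞ E_n. Suppose f : ℝ → ℝ satisfies |f(a) − f(b)| ≤ λ(E ∩ [a,b]) for all a < b. Then lip f(x) = liminf_{r→0⁺} (1/r)·sup{|f(x)−f(y)| : |x−y| ≤ r} ≤ 1 at every x ∈ ℝ. -/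
/-!
Since `volume (E ∩ Icc a b) ≤ b - a`, the growth bound makes `f` a 1-Lipschitz function. Hence
`|f x - f y| ≤ r` whenever `|x - y| ≤ r`, so `0 ≤ Mf f x r ≤ 1` for every `r > 0`, and the same
upper bound passes to the lower limit. -/

open MeasureTheory Filter Set

lemma abs_sub_le_of_growth_bound {E : Set ℝ} {f : ℝ → ℝ}
    (hgrowth : ∀ a b : ℝ, a < b → |f a - f b| ≤ (volume (E ∩ Set.Icc a b)).toReal) (x y : ℝ) :
    |f x - f y| ≤ |x - y| := by
  have key : ∀ a b : ℝ, a < b → |f a - f b| ≤ b - a := fun a b hab => by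
    refine (hgrowth a b hab).trans ?_
    refine ENNReal.toReal_le_of_le_ofReal (by linarith) ?_
    exact (measure_mono inter_subset_right).trans Real.volume_Icc.le
  rcases lt_trichotomy x y with h | rfl | h
  · simpa [abs_of_neg (sub_neg.2 h)] using key x y h
  · simp
  · rw [abs_sub_comm, abs_of_pos (sub_pos.2 h)]
    exact key y x h

theorem lip_le_one_of_growth_bound (En : ℕ → Set ℝ) (hmono : Monotone En)
    (hclosed : ∀ n, IsClosed (En n)) (hsosd : ∀ n, SOSD (En n))
    (hne : (En 0).Nonempty) (E : Set ℝ) (hE : E = ⋃ n, En n)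
    (f : ℝ → ℝ)
    (hgrowth : ∀ a b : ℝ, a < b → |f a - f b| ≤ (volume (E ∩ Set.Icc a b)).toReal) :
    ∀ x : ℝ, lip f x ≤ 1 := by
  intro x
  have hpos : ∀ᶠ r : ℝ in nhdsWithin 0 (Set.Ioi 0), 0 < r := eventually_mem_nhdsWithin
  have hle : ∀ᶠ r in nhdsWithin 0 (Set.Ioi 0), Mf f x r ≤ 1 := by
    filter_upwards [hpos] with r hr
    refine (div_le_one hr).2 (Real.sSup_le ?_ hr.le)
    rintro d ⟨y, hy, rfl⟩
    exact (abs_sub_le_of_growth_bound hgrowth x y).trans hy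
  -- The real-valued `liminf` is only meaningful for a function bounded below near `0`.
  have hge : ∀ᶠ r in nhdsWithin 0 (Set.Ioi 0), 0 ≤ Mf f x r := by
    filter_upwards [hpos] with r hr
    refine div_nonneg (Real.sSup_nonneg ?_) hr.le
    rintro d ⟨y, -, rfl⟩
    exact abs_nonneg _
  exact liminf_le_of_frequently_le hle.frequently (isBoundedUnder_of_eventually_ge hge)
end
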